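/- arXiv:1402.1748 — 2 statements merged into one kernel-verified Lean document; each statement's English description precedes it below -/
import Mathlib

section
/- (First variation of Huisken's two-point function at an interior minimum) Let F : S¹ → ℝ² be a smooth embedded closed curve of length L, with intrinsic distance d(x,y) (the smaller of the arclengths of the two arcs joining x and y). Fix α > 0 and define Z_α(x,y) = α |F(x) − F(y)| − L sin(π d(x,y)/L). Suppose Z_α attains a local minimum at a pair (x̄, ȳ) with x̄ ≠ ȳ and 0 < d(x̄,ȳ) < L/2, and let u and v denote the unit tangent vectors to the curve at x̄ and ȳ respectively, each oriented in the direction of increasing intrinsic distance from the other point (i.e. pointing away from the minimizing arc). Then α ⟨F(x̄) − F(ȳ), u⟩ = π |F(x̄) − F(ȳ)| cos(π d(x̄,ȳ)/L) and α ⟨F(x̄) − F(ȳ), v⟩ = −π |F(x̄) − F(ȳ)| cos(π d(x̄,ȳ)/L); in particular ⟨F(x̄) − F(ȳ), u + v⟩ = 0. -/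
noncomputable section
open Real Set
open scoped RealInnerProductSpace

/-- The plane `ℝ²`. -/
abbrev E2 := EuclideanSpace ℝ (Fin 2)

/-- The length of a closed curve `F : ℝ → ℝ²` parametrized by `S¹ = ℝ/2πℤ`. -/
def len (F : ℝ → E2) : ℝ := ∫ u in (0:ℝ)..(2*π), ‖deriv F u‖

/-- The intrinsic distance `d(x,y)`: the infimum of the arclengths of the arcs of
the closed curve `F` joining `x` to `y` (over all representatives of `y` mod `2π`). -/
def idist (F : ℝ → E2) (x y : ℝ) : ℝ :=
  sInf {d : ℝ | ∃ n : ℤ, d = |∫ u in x..(y + 2*π*n), ‖deriv F u‖|}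

/-!
The intrinsic distance is the quotient norm, in the circle `ℝ/Lℤ`, of the arclength between the two
points. Away from `0` and from the half period this norm is differentiable with derivative `±1`, so
when one point moves, `d` changes at the rate `±|F'|`, that is, at unit rate along the outward unit
tangent. Setting to zero the derivative of `Z_α` in this direction gives the identity at `x̄`. Since
`Z_α` is symmetric, exchanging the two points gives the identity at `ȳ`, and the two add up to the
orthogonality relation.
-/

open scoped Topology

theorem norm_coe_addCircle_eq_sInf (p t : ℝ) :
    ‖(t : AddCircle p)‖ = sInf {d : ℝ | ∃ n : ℤ, d = |t + n * p|} := by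
  refine (quotient_norm_mk_eq (AddSubgroup.zmultiples p) t).trans (congrArg sInf ?_)
  ext d
  simp [AddSubgroup.mem_zmultiples_iff, eq_comm]

theorem exists_hasDerivAt_norm_coe_addCircle {p t : ℝ} (ht₀ : 0 < ‖(t : AddCircle p)‖)
    (ht : ‖(t : AddCircle p)‖ < |p| / 2) :
    ∃ σ : ℝ, |σ| = 1 ∧ HasDerivAt (fun s : ℝ => ‖(s : AddCircle p)‖) σ t := by
  have hp : p ≠ 0 := abs_pos.mp (by linarith)
  set m : ℤ := round (p⁻¹ * t)
  have norm_t : ‖(t : AddCircle p)‖ = |t - m * p| := AddCircle.norm_eq p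
  rw [norm_t] at ht₀ ht
  have norm_near : ∀ᶠ s : ℝ in 𝓝 t, ‖(s : AddCircle p)‖ = |s - m * p| := by
    have abs_cont : ContinuousAt (fun s : ℝ => |s - m * p|) t := by fun_prop
    filter_upwards [abs_cont.eventually_lt_const ht] with s hs
    have coe_eq : ((s - m * p : ℝ) : AddCircle p) = s := by
      rw [← zsmul_eq_mul, AddCircle.coe_sub, AddCircle.coe_zsmul, AddCircle.coe_period, smul_zero,
        sub_zero]
    rw [← coe_eq, AddCircle.norm_coe_eq_abs_iff p hp]
    exact hs.le
  refine ⟨SignType.sign (t - m * p), ?_, ?_⟩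
  · rcases lt_or_gt_of_ne (abs_pos.mp ht₀) with h | h <;> simp [h]
  · exact ((hasDerivAt_abs (abs_pos.mp ht₀)).comp_sub_const t (m * p)).congr_of_eventuallyEq
      norm_near

theorem periodic_norm_deriv {E : Type*} [NormedAddCommGroup E] [NormedSpace ℝ E] {f : ℝ → E}
    {T : ℝ} (hf : Function.Periodic f T) : Function.Periodic (fun x => ‖deriv f x‖) T := by
  intro x
  simp only [← deriv_comp_add_const f T x, funext hf]

theorem integral_add_mul_period {E : Type*} [NormedAddCommGroup E] [NormedSpace ℝ E] {g : ℝ → E}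
    {T : ℝ} (hint : ∀ a b, IntervalIntegrable g MeasureTheory.volume a b)
    (hper : Function.Periodic g T) (x y : ℝ) (n : ℤ) :
    ∫ u in x..(y + T * n), g u = (∫ u in x..y, g u) + n • ∫ u in (0 : ℝ)..T, g u := by
  have one_period : ∫ u in y..(y + T), g u = ∫ u in (0 : ℝ)..T, g u := by
    simpa only [zero_add] using hper.intervalIntegral_add_eq y 0
  rw [← intervalIntegral.integral_add_adjacent_intervals (hint x y) (hint y _), mul_comm T,
    ← zsmul_eq_mul, hper.intervalIntegral_add_zsmul_eq n y hint, one_period]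

section IntrinsicDistance

variable {F : ℝ → E2}

theorem idist_eq_norm_coe_integral (hF : ContDiff ℝ 1 F) (hper : Function.Periodic F (2 * π))
    (x y : ℝ) :
    idist F x y = ‖((∫ u in x..y, ‖deriv F u‖ : ℝ) : AddCircle (len F))‖ := by
  have speed_integrable :=
    hF.continuous_deriv_one.norm.intervalIntegrable (μ := MeasureTheory.volume)
  rw [norm_coe_addCircle_eq_sInf]
  simp only [idist, len, integral_add_mul_period speed_integrable (periodic_norm_deriv hper),
    zsmul_eq_mul]

theorem idist_comm (hF : ContDiff ℝ 1 F) (hper : Function.Periodic F (2 * π)) (x y : ℝ) :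
    idist F x y = idist F y x := by
  rw [idist_eq_norm_coe_integral hF hper, idist_eq_norm_coe_integral hF hper,
    intervalIntegral.integral_symm, AddCircle.coe_neg, norm_neg]

theorem exists_hasDerivAt_idist_right (hF : ContDiff ℝ 1 F) (hper : Function.Periodic F (2 * π))
    {x y : ℝ} (hd₀ : 0 < idist F x y) (hd : idist F x y < len F / 2) :
    ∃ d' : ℝ, |d'| = ‖deriv F y‖ ∧ HasDerivAt (fun z => idist F x z) d' y := by
  simp only [idist_eq_norm_coe_integral hF hper] at hd₀ hd ⊢
  obtain ⟨σ, hσ, norm_deriv⟩ :=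
    exists_hasDerivAt_norm_coe_addCircle hd₀ (hd.trans_le (by gcongr; exact le_abs_self _))
  have arclength_deriv : HasDerivAt (fun z => ∫ u in x..z, ‖deriv F u‖) ‖deriv F y‖ y :=
    (hF.continuous_deriv_one.norm.integral_hasStrictDerivAt x y).hasDerivAt
  refine ⟨σ * ‖deriv F y‖, by rw [abs_mul, hσ, one_mul, abs_norm], ?_⟩
  exact HasDerivAt.comp (h₂ := fun s : ℝ => ‖(s : AddCircle (len F))‖) y norm_deriv arclength_deriv

end IntrinsicDistance

section Criticality

variable {E : Type*} [NormedAddCommGroup E] [InnerProductSpace ℝ E] {G : ℝ → E} {G' : E}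
  {D : ℝ → ℝ} {D' α L x : ℝ}

theorem hasDerivAt_norm_of_ne_zero (hG : HasDerivAt G G' x) (hx : G x ≠ 0) :
    HasDerivAt (fun t => ‖G t‖) (⟪G x, G'⟫ / ‖G x‖) x := by
  have sqrt_deriv := hG.norm_sq.sqrt (pow_ne_zero 2 (norm_ne_zero_iff.mpr hx))
  simp only [Real.sqrt_sq (norm_nonneg _)] at sqrt_deriv
  rwa [mul_div_mul_left _ _ two_ne_zero] at sqrt_deriv

theorem inner_deriv_eq_of_isLocalExtr (hL : L ≠ 0) (hG : HasDerivAt G G' x)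
    (hD : HasDerivAt D D' x)
    (hextr : IsLocalExtr (fun t => α * ‖G t‖ - L * sin (π * D t / L)) x) :
    α * ⟪G x, G'⟫ = π * ‖G x‖ * cos (π * D x / L) * D' := by
  rcases eq_or_ne (G x) 0 with hx | hx
  · simp [hx]
  have sin_deriv : HasDerivAt (fun t => L * sin (π * D t / L))
      (L * (cos (π * D x / L) * (π * D' / L))) x :=
    ((hD.const_mul π).div_const L).sin.const_mul L
  have critical : α * (⟪G x, G'⟫ / ‖G x‖) - L * (cos (π * D x / L) * (π * D' / L)) = 0 :=
    hextr.hasDerivAt_eq_zero (((hasDerivAt_norm_of_ne_zero hG hx).const_mul α).sub sin_deriv)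
  have norm_ne : ‖G x‖ ≠ 0 := norm_ne_zero_iff.mpr hx
  field_simp at critical
  linarith

theorem inner_unit_deriv_eq_of_isLocalExtr {ε : ℝ} (hL : L ≠ 0) (hG : HasDerivAt G G' x)
    (hD : HasDerivAt D D' x) (hD' : |D'| = ‖G'‖) (hε : ε = 1 ∨ ε = -1) (hεD' : 0 < ε * D')
    (hextr : IsLocalExtr (fun t => α * ‖G t‖ - L * sin (π * D t / L)) x) :
    α * ⟪G x, ε • ‖G'‖⁻¹ • G'⟫ = π * ‖G x‖ * cos (π * D x / L) := by
  have speed : ε * D' = ‖G'‖ := by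
    rw [← hD', ← abs_of_pos hεD', abs_mul, (abs_eq zero_le_one).mpr hε, one_mul]
  calc α * ⟪G x, ε • ‖G'‖⁻¹ • G'⟫
      = ε * ‖G'‖⁻¹ * (α * ⟪G x, G'⟫) := by rw [inner_smul_right, inner_smul_right]; ring
    _ = π * ‖G x‖ * cos (π * D x / L) * ((ε * D') * ‖G'‖⁻¹) := by
        rw [inner_deriv_eq_of_isLocalExtr hL hG hD hextr]; ring
    _ = π * ‖G x‖ * cos (π * D x / L) := by
        rw [speed, mul_inv_cancel₀ (speed ▸ hεD'.ne'), mul_one]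

end Criticality

section TwoPointFunction

variable {F : ℝ → E2} {α : ℝ}

/-- Huisken's two-point function `Z_α` of the closed curve `F`, in the parameters `x` and `y` of
the two points. -/
def twoPointFunction (F : ℝ → E2) (α x y : ℝ) : ℝ :=
  α * ‖F x - F y‖ - len F * sin (π * idist F x y / len F)

theorem twoPointFunction_comm (hF : ContDiff ℝ 1 F) (hper : Function.Periodic F (2 * π))
    (x y : ℝ) : twoPointFunction F α x y = twoPointFunction F α y x := by
  rw [twoPointFunction, twoPointFunction, norm_sub_rev, idist_comm hF hper]

theorem inner_unitTangent_right_of_isLocalExtr (hF : ContDiff ℝ 1 F)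
    (hper : Function.Periodic F (2 * π)) {x y ε : ℝ} (hd₀ : 0 < idist F x y)
    (hd : idist F x y < len F / 2) (hextr : IsLocalExtr (twoPointFunction F α x) y)
    (hε : ε = 1 ∨ ε = -1) (hεd : 0 < ε * deriv (fun z => idist F x z) y) :
    α * ⟪F x - F y, ε • ‖deriv F y‖⁻¹ • deriv F y⟫ =
      -(π * ‖F x - F y‖ * cos (π * idist F x y / len F)) := by
  obtain ⟨d', hd', idist_deriv⟩ := exists_hasDerivAt_idist_right hF hper hd₀ hd
  have chord_deriv : HasDerivAt (fun z => F x - F z) (-deriv F y) y :=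
    (hF.differentiable one_ne_zero y).hasDerivAt.const_sub (F x)
  have hL : len F ≠ 0 := by linarith
  rw [idist_deriv.deriv] at hεd
  have first_variation := inner_unit_deriv_eq_of_isLocalExtr hL chord_deriv idist_deriv
    (hd'.trans (norm_neg _).symm) hε hεd hextr
  rw [← first_variation, norm_neg, smul_neg, smul_neg, inner_neg_right, mul_neg, neg_neg]

theorem inner_unitTangent_left_of_isLocalExtr (hF : ContDiff ℝ 1 F)
    (hper : Function.Periodic F (2 * π)) {x y ε : ℝ} (hd₀ : 0 < idist F x y)
    (hd : idist F x y < len F / 2) (hextr : IsLocalExtr (fun z => twoPointFunction F α z y) x)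
    (hε : ε = 1 ∨ ε = -1) (hεd : 0 < ε * deriv (fun z => idist F z y) x) :
    α * ⟪F x - F y, ε • ‖deriv F x‖⁻¹ • deriv F x⟫ =
      π * ‖F x - F y‖ * cos (π * idist F x y / len F) := by
  simp only [twoPointFunction_comm hF hper _ y, idist_comm hF hper _ y] at hd₀ hd hextr hεd ⊢
  rw [← neg_sub (F y), inner_neg_left, norm_neg, mul_neg,
    inner_unitTangent_right_of_isLocalExtr hF hper hd₀ hd hextr hε hεd, neg_neg]

theorem first_variation_of_two_point_function_at_min_general (hF : ContDiff ℝ 1 F)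
    (hper : Function.Periodic F (2 * π)) (hα : α ≠ 0) {x₀ y₀ εx εy : ℝ}
    (hd₀ : 0 < idist F x₀ y₀) (hd : idist F x₀ y₀ < len F / 2)
    (hextr : IsLocalExtr (fun p : ℝ × ℝ => twoPointFunction F α p.1 p.2) (x₀, y₀))
    (hεx : εx = 1 ∨ εx = -1) (hεy : εy = 1 ∨ εy = -1)
    (hx : 0 < εx * deriv (fun x => idist F x y₀) x₀)
    (hy : 0 < εy * deriv (fun y => idist F x₀ y) y₀) :
    α * ⟪F x₀ - F y₀, εx • ‖deriv F x₀‖⁻¹ • deriv F x₀⟫ =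
        π * ‖F x₀ - F y₀‖ * cos (π * idist F x₀ y₀ / len F) ∧
      α * ⟪F x₀ - F y₀, εy • ‖deriv F y₀‖⁻¹ • deriv F y₀⟫ =
        -(π * ‖F x₀ - F y₀‖ * cos (π * idist F x₀ y₀ / len F)) ∧
      ⟪F x₀ - F y₀, εx • ‖deriv F x₀‖⁻¹ • deriv F x₀ + εy • ‖deriv F y₀‖⁻¹ • deriv F y₀⟫ = 0 := by
  have hextr_x : IsLocalExtr (fun x => twoPointFunction F α x y₀) x₀ :=
    hextr.comp_continuous (g := fun x => (x, y₀)) (by fun_prop)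
  have hextr_y : IsLocalExtr (twoPointFunction F α x₀) y₀ :=
    hextr.comp_continuous (g := fun y => (x₀, y)) (by fun_prop)
  have inner_x := inner_unitTangent_left_of_isLocalExtr hF hper hd₀ hd hextr_x hεx hx
  have inner_y := inner_unitTangent_right_of_isLocalExtr hF hper hd₀ hd hextr_y hεy hy
  refine ⟨inner_x, inner_y, (mul_eq_zero_iff_left hα).mp ?_⟩
  rw [inner_add_right, mul_add, inner_x, inner_y, add_neg_cancel]

end TwoPointFunction

/-- **First variation of Huisken's two-point function at an interior minimum.**
If `Z_α(x,y) = α|F(x) - F(y)| - L sin(π d(x,y)/L)` attains a local minimum at a pair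
`(x₀,y₀)` with `x₀ ≠ y₀` and `0 < d(x₀,y₀) < L/2`, and `u`, `v` are the unit tangent
vectors at `x₀`, `y₀` oriented in the direction of increasing intrinsic distance from
the other point, then
`α⟨F(x₀) - F(y₀), u⟩ = π|F(x₀) - F(y₀)| cos(π d(x₀,y₀)/L)`,
`α⟨F(x₀) - F(y₀), v⟩ = -π|F(x₀) - F(y₀)| cos(π d(x₀,y₀)/L)`,
and in particular `⟨F(x₀) - F(y₀), u + v⟩ = 0`. -/
theorem first_variation_of_two_point_function_at_min
    (F : ℝ → E2) (hsm : ContDiff ℝ (⊤ : ℕ∞) F)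
    (hper : ∀ x : ℝ, F (x + 2*π) = F x)
    (himm : ∀ x : ℝ, deriv F x ≠ 0)
    (hemb : ∀ x y : ℝ, F x = F y → ∃ n : ℤ, y = x + 2*π*n)
    (L : ℝ) (hL : L = len F)
    (α : ℝ) (hα : 0 < α)
    (Z : ℝ → ℝ → ℝ)
    (hZ : ∀ x y : ℝ, Z x y = α * ‖F x - F y‖ - L * sin (π * idist F x y / L))
    (x₀ y₀ : ℝ) (hne : ¬ ∃ n : ℤ, y₀ = x₀ + 2*π*n)
    (hd0 : 0 < idist F x₀ y₀) (hdL : idist F x₀ y₀ < L / 2)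
    (hmin : IsLocalMin (fun p : ℝ × ℝ => Z p.1 p.2) (x₀, y₀))
    (u v : E2) (εx εy : ℝ)
    (hεx : εx = 1 ∨ εx = -1) (hεy : εy = 1 ∨ εy = -1)
    (hu : u = εx • (‖deriv F x₀‖⁻¹ • deriv F x₀))
    (hv : v = εy • (‖deriv F y₀‖⁻¹ • deriv F y₀))
    -- `u` (resp. `v`) points in the direction in which the intrinsic distance
    -- to the other point increases:
    (hu' : 0 < εx * deriv (fun x => idist F x y₀) x₀)
    (hv' : 0 < εy * deriv (fun y => idist F x₀ y) y₀) :
    α * ⟪F x₀ - F y₀, u⟫ = π * ‖F x₀ - F y₀‖ * cos (π * idist F x₀ y₀ / L) ∧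
    α * ⟪F x₀ - F y₀, v⟫ = -(π * ‖F x₀ - F y₀‖ * cos (π * idist F x₀ y₀ / L)) ∧
    ⟪F x₀ - F y₀, u + v⟫ = 0 := by
  obtain rfl : Z = twoPointFunction F α := by
    ext x y
    rw [hZ, hL, twoPointFunction]
  subst hL hu hv
  exact first_variation_of_two_point_function_at_min_general (hsm.of_le (by simp)) hper hα.ne'
    hd0 hdL hmin.isExtr hεx hεy hu' hv'
end
end

section
/- (Lawson's conjecture, proved by Brendle) Let Λ ⊂ ℝ² be a lattice spanned by two ℝ-linearly independent vectors, and let F : ℝ² → ℝ⁴ be a smooth Λ-periodic map taking values in the unit sphere S³ = {x ∈ ℝ⁴ : |x| = 1} such that: (i) F is a conformal immersion, i.e. |∂F/∂s| = |∂F/∂t| > 0 and ⟨∂F/∂s, ∂F/∂t⟩ = 0 at every point; (ii) F satisfies the minimal surface (harmonic map) equation ΔF + (|∂F/∂s|² + |∂F/∂t|²) F = 0, where ΔF = ∂²F/∂s² + ∂²F/∂t²; and (iii) F is embedded, i.e. F(p) = F(q) implies p − q ∈ Λ. Then F is congruent to the Clifford torus: there exists an orthogonal transformation Q ∈ O(4)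 such that F(ℝ²) = Q · {x ∈ S³ : x₁² + x₂² = x₃² + x₄² = 1/2}. -/
noncomputable section
open Real Set
open scoped RealInnerProductSpace

/-- Euclidean four-space `ℝ⁴`, the ambient space of `S³`. -/
abbrev E4 := EuclideanSpace ℝ (Fin 4)

/-- The partial derivative `∂F/∂s`. -/
def pds (F : ℝ → ℝ → E4) (s t : ℝ) : E4 := deriv (fun u => F u t) s

/-- The partial derivative `∂F/∂t`. -/
def pdt (F : ℝ → ℝ → E4) (s t : ℝ) : E4 := deriv (fun v => F s v) t

/-- The Laplacian `ΔF = ∂²F/∂s² + ∂²F/∂t²`. -/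
def lap (F : ℝ → ℝ → E4) (s t : ℝ) : E4 :=
  deriv (fun u => pds F u t) s + deriv (fun v => pdt F s v) t

/-- The Clifford torus `{x ∈ S³ : x₁² + x₂² = x₃² + x₄² = 1/2}` as a subset of `ℝ⁴`. -/
def cliffordTorus : Set E4 :=
  {x : E4 | x 0 ^ 2 + x 1 ^ 2 = 1/2 ∧ x 2 ^ 2 + x 3 ^ 2 = 1/2}

/-!
The Codazzi equations make the Hopf differential of `F` a bounded entire function, hence a constant,
and the Gauss equation at a minimum of the conformal factor `E` shows that it is nonzero. A
complex-linear change of coordinates then turns the second fundamental form into `ds² - dt²`.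

Brendle's idea is to study `Z(x, y) = Φ(x) (1 - ⟪F x, F y⟫) + ⟪N x, F y⟫`, which is nonnegative
when the ball touching `F` at `F x` with curvature `Φ(x)` meets the surface nowhere else in its
interior. If `Z` with `Φ = 1 / E` takes a negative value, embeddedness provides a multiple `K / E`
with `K > 1` for which `Z ≥ 0` touches zero off the diagonal. Comparing second derivatives along
the reflection that exchanges `F x` and `F y`, after perturbing `Φ` by a strict barrier, excludes
such a contact unless `E` is constant. So `Z ≥ 0`, for `N` and for `-N`; since `Z` vanishes to
third order at the diagonal in the principal directions, this forces `∇E = 0`. Then `E = 1` by the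
Gauss equation, and `F` solves linear equations with constant coefficients whose solutions
parametrize the Clifford torus.
-/

open Filter Topology
open scoped ContDiff

/-! ### Directional derivatives -/

section DirectionalDerivative

variable {P V : Type*} [NormedAddCommGroup P] [NormedSpace ℝ P]
  [NormedAddCommGroup V] [NormedSpace ℝ V]

/-- Smooth (`C^∞`) maps between real normed spaces. -/
abbrev IsSmooth (f : P → V) : Prop := ContDiff ℝ ∞ f

/-- The derivative of `f` in the direction of the constant vector field `v`, as a map of the base
point, so that it can be iterated. -/
def dirDeriv (v : P) (f : P → V) (p : P) : V := fderiv ℝ f p v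

lemma IsSmooth.differentiableAt {f : P → V} (hf : IsSmooth f) {p : P} : DifferentiableAt ℝ f p :=
  ContDiff.differentiable hf (by simp) p

lemma IsSmooth.fderiv {f : P → V} (hf : IsSmooth f) : IsSmooth (fderiv ℝ f) :=
  hf.fderiv_right (by simp)

lemma IsSmooth.dirDeriv {f : P → V} (hf : IsSmooth f) (v : P) : IsSmooth (dirDeriv v f) :=
  ContDiff.clm_apply hf.fderiv contDiff_const

lemma dirDeriv_dirDeriv {f : P → V} (hf : IsSmooth f) (v w p : P) :
    dirDeriv v (dirDeriv w f) p = fderiv ℝ (fderiv ℝ f) p v w := by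
  have hd := hf.fderiv.differentiableAt (p := p).hasFDerivAt.clm_apply (hasFDerivAt_const w p)
  change fderiv ℝ (fun q => fderiv ℝ f q w) p v = _
  simp [hd.fderiv]

lemma dirDeriv_comm {f : P → V} (hf : IsSmooth f) (v w : P) :
    dirDeriv v (dirDeriv w f) = dirDeriv w (dirDeriv v f) := by
  funext p
  rw [dirDeriv_dirDeriv hf, dirDeriv_dirDeriv hf]
  exact second_derivative_symmetric (fun _ => hf.differentiableAt.hasFDerivAt)
    hf.fderiv.differentiableAt.hasFDerivAt v w

lemma dirDeriv_eq_zero_of_forall_eq {f : P → V} {c : V} (h : ∀ p, f p = c) (v p : P) :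
    dirDeriv v f p = 0 := by
  simp [dirDeriv, funext h]

@[simp]
lemma dirDeriv_zero (f : P → V) (p : P) : dirDeriv 0 f p = 0 := by
  simp [dirDeriv]

lemma dirDeriv_add {f g : P → V} {p : P} (hf : DifferentiableAt ℝ f p)
    (hg : DifferentiableAt ℝ g p) (v : P) :
    dirDeriv v (fun q => f q + g q) p = dirDeriv v f p + dirDeriv v g p := by
  simp [dirDeriv, fderiv_fun_add hf hg]

lemma dirDeriv_sub {f g : P → V} {p : P} (hf : DifferentiableAt ℝ f p)
    (hg : DifferentiableAt ℝ g p) (v : P) :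
    dirDeriv v (fun q => f q - g q) p = dirDeriv v f p - dirDeriv v g p := by
  simp [dirDeriv, fderiv_fun_sub hf hg]

lemma dirDeriv_neg (f : P → V) (v p : P) :
    dirDeriv v (fun q => -f q) p = -dirDeriv v f p := by
  simp [dirDeriv, fderiv_fun_neg]

lemma dirDeriv_smul {c : P → ℝ} {f : P → V} {p : P} (hc : DifferentiableAt ℝ c p)
    (hf : DifferentiableAt ℝ f p) (v : P) :
    dirDeriv v (fun q => c q • f q) p = c p • dirDeriv v f p + dirDeriv v c p • f p := by
  simp [dirDeriv, fderiv_fun_smul hc hf]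

lemma dirDeriv_mul {f g : P → ℝ} {p : P} (hf : DifferentiableAt ℝ f p)
    (hg : DifferentiableAt ℝ g p) (v : P) :
    dirDeriv v (fun q => f q * g q) p = f p * dirDeriv v g p + dirDeriv v f p * g p :=
  dirDeriv_smul hf hg v

lemma dirDeriv_const_smul {f : P → V} {p : P} (c : ℝ) (hf : DifferentiableAt ℝ f p) (v : P) :
    dirDeriv v (fun q => c • f q) p = c • dirDeriv v f p := by
  simp [dirDeriv, fderiv_fun_const_smul hf]

lemma dirDeriv_const_mul {f : P → ℝ} {p : P} (c : ℝ) (hf : DifferentiableAt ℝ f p) (v : P) :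
    dirDeriv v (fun q => c * f q) p = c * dirDeriv v f p :=
  dirDeriv_const_smul c hf v

lemma dirDeriv_real_comp {f : P → ℝ} {g : ℝ → ℝ} {g' : ℝ} {p : P} (hg : HasDerivAt g g' (f p))
    (hf : DifferentiableAt ℝ f p) (v : P) :
    dirDeriv v (fun q => g (f q)) p = g' * dirDeriv v f p := by
  change fderiv ℝ (g ∘ f) p v = _
  simp [(hg.comp_hasFDerivAt p hf.hasFDerivAt).fderiv, dirDeriv]

lemma dirDeriv_inner {H : Type*} [NormedAddCommGroup H] [InnerProductSpace ℝ H] {f g : P → H}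
    {p : P} (hf : DifferentiableAt ℝ f p) (hg : DifferentiableAt ℝ g p) (v : P) :
    dirDeriv v (fun q => ⟪f q, g q⟫) p = ⟪dirDeriv v f p, g p⟫ + ⟪f p, dirDeriv v g p⟫ := by
  rw [dirDeriv, fderiv_inner_apply ℝ hf hg, add_comm]
  rfl

lemma dirDeriv_comp_clm {Q : Type*} [NormedAddCommGroup Q] [NormedSpace ℝ Q] (L : Q →L[ℝ] P)
    {f : P → V} (hf : Differentiable ℝ f) (v : Q) :
    dirDeriv v (fun q => f (L q)) = fun q => dirDeriv (L v) f (L q) := by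
  funext q
  change fderiv ℝ (f ∘ L) q v = _
  simp [((hf (L q)).hasFDerivAt.comp q L.hasFDerivAt).fderiv, dirDeriv]

lemma periodic_dirDeriv {f : P → V} {l : P} (hf : Function.Periodic f l) (v : P) :
    Function.Periodic (dirDeriv v f) l := by
  intro p
  have hshift : (fun r => f (r + l)) = f := funext hf
  rw [dirDeriv, dirDeriv, ← fderiv_comp_add_right, hshift]

lemma hasDerivAt_comp_line {f : P → V} (hf : Differentiable ℝ f) (p v : P) (τ : ℝ) :
    HasDerivAt (fun τ : ℝ => f (p + τ • v)) (dirDeriv v f (p + τ • v)) τ := by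
  have hline : HasDerivAt (fun τ : ℝ => p + τ • v) v τ := by
    simpa using ((hasDerivAt_id τ).smul_const v).const_add p
  exact (hf (p + τ • v)).hasFDerivAt.comp_hasDerivAt τ hline

lemma hasDerivAt_inner_comp_line {H : Type*} [NormedAddCommGroup H] [InnerProductSpace ℝ H]
    {f : P → H} (hf : Differentiable ℝ f) (a : H) (p v : P) (τ : ℝ) :
    HasDerivAt (fun τ : ℝ => ⟪a, f (p + τ • v)⟫) ⟪a, dirDeriv v f (p + τ • v)⟫ τ := by
  simpa using (hasDerivAt_const τ a).inner ℝ (hasDerivAt_comp_line hf p v τ)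

end DirectionalDerivative

local notation "∂₁" => dirDeriv ((1, 0) : ℝ × ℝ)
local notation "∂₂" => dirDeriv ((0, 1) : ℝ × ℝ)

section Plane

variable {V : Type*} [NormedAddCommGroup V] [NormedSpace ℝ V]

lemma eq_smul_add_smul_coordinates (v : ℝ × ℝ) :
    v = v.1 • ((1, 0) : ℝ × ℝ) + v.2 • ((0, 1) : ℝ × ℝ) := by
  ext <;> simp

lemma dirDeriv_eq_coordinates (f : ℝ × ℝ → V) (v p : ℝ × ℝ) :
    dirDeriv v f p = v.1 • ∂₁ f p + v.2 • ∂₂ f p := by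
  conv_lhs => rw [eq_smul_add_smul_coordinates v, dirDeriv, map_add, map_smul, map_smul]
  rfl

lemma dirDeriv_dirDeriv_eq_coordinates {f : ℝ × ℝ → V} (hf : IsSmooth f) (v w p : ℝ × ℝ) :
    dirDeriv v (dirDeriv w f) p = (v.1 * w.1) • ∂₁ (∂₁ f) p
      + (v.1 * w.2 + v.2 * w.1) • ∂₁ (∂₂ f) p + (v.2 * w.2) • ∂₂ (∂₂ f) p := by
  have hsymm := congrFun (dirDeriv_comm hf (0, 1) (1, 0)) p
  rw [dirDeriv_dirDeriv hf (0, 1)] at hsymm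
  rw [dirDeriv_dirDeriv hf]
  conv_lhs => rw [eq_smul_add_smul_coordinates v, eq_smul_add_smul_coordinates w]
  simp only [map_add, map_smul, add_apply, smul_apply,
    hsymm, dirDeriv_dirDeriv hf]
  module

end Plane

/-! ### Taylor conditions at a minimum -/

section Taylor

variable {f f' f'' : ℝ → ℝ} {c : ℝ}

lemma second_deriv_nonneg_of_forall_le (h₁ : ∀ τ, HasDerivAt f (f' τ) τ)
    (h₂ : HasDerivAt f' c 0) (hmin : ∀ τ, f 0 ≤ f τ) : 0 ≤ c := by
  by_contra! hc
  have hf' : deriv f = f' := funext fun τ => (h₁ τ).deriv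
  have hcrit : f' 0 = 0 := IsLocalMin.hasDerivAt_eq_zero (Eventually.of_forall hmin) (h₁ 0)
  have hmax : IsLocalMax f 0 := isLocalMax_of_deriv_deriv_neg (by rwa [hf', h₂.deriv])
    (by rw [hf', hcrit]) (h₁ 0).continuousAt
  have hconst : ∀ᶠ τ in 𝓝 (0 : ℝ), f τ = f 0 :=
    hmax.mono fun τ hτ => le_antisymm hτ (hmin τ)
  have hf'_zero : f' =ᶠ[𝓝 0] fun _ => 0 := hconst.eventually_nhds.mono fun τ hτ =>
    (h₁ τ).unique ((hasDerivAt_const τ (f 0)).congr_of_eventuallyEq hτ)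
  exact hc.ne (h₂.unique ((hasDerivAt_const 0 0).congr_of_eventuallyEq hf'_zero))

lemma nonneg_of_second_deriv_nonneg (h₁ : ∀ τ, HasDerivAt f (f' τ) τ)
    (h₂ : ∀ τ, HasDerivAt f' (f'' τ) τ) (hf : f 0 = 0) (hf' : f' 0 = 0)
    (hf'' : ∀ τ ∈ Icc (0 : ℝ) 1, 0 ≤ f'' τ) : 0 ≤ f 1 := by
  have mono_f' : MonotoneOn f' (Icc 0 1) :=
    monotoneOn_of_hasDerivWithinAt_nonneg (convex_Icc 0 1)
      (fun τ _ => (h₂ τ).continuousAt.continuousWithinAt)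
      (fun τ _ => (h₂ τ).hasDerivWithinAt) (fun τ hτ => hf'' τ (interior_subset hτ))
  have f'_nonneg : ∀ τ ∈ Icc (0 : ℝ) 1, 0 ≤ f' τ := fun τ hτ =>
    hf'.ge.trans (mono_f' (by simp) hτ hτ.1)
  have mono_f : MonotoneOn f (Icc 0 1) :=
    monotoneOn_of_hasDerivWithinAt_nonneg (convex_Icc 0 1)
      (fun τ _ => (h₁ τ).continuousAt.continuousWithinAt)
      (fun τ _ => (h₁ τ).hasDerivWithinAt) (fun τ hτ => f'_nonneg τ (interior_subset hτ))
  exact hf.ge.trans (mono_f (by simp) (by simp) zero_le_one)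

lemma exists_forall_neg_of_hasDerivAt_neg (h : HasDerivAt f c 0) (hf : f 0 = 0) (hc : c < 0) :
    ∃ δ > 0, ∀ τ ∈ Ioc (0 : ℝ) δ, f τ < 0 := by
  have hslope : ∀ᶠ τ in 𝓝[>] (0 : ℝ), slope f 0 τ < 0 :=
    ((hasDerivAt_iff_tendsto_slope.1 h).mono_left
      (nhdsWithin_mono _ fun τ (hτ : 0 < τ) => hτ.ne')).eventually_lt_const hc
  obtain ⟨δ, hδ, hneg⟩ := mem_nhdsGT_iff_exists_Ioc_subset.1 hslope
  refine ⟨δ, hδ, fun τ hτ => ?_⟩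
  have := hneg hτ
  rw [mem_ofPred_eq, slope_def_field, hf, sub_zero, sub_zero] at this
  by_contra! hcon
  exact this.not_ge (div_nonneg hcon hτ.1.le)

lemma strictAntiOn_Icc_of_hasDerivAt_neg {δ : ℝ} (h : ∀ τ, HasDerivAt f (f' τ) τ)
    (hneg : ∀ τ ∈ Ioo (0 : ℝ) δ, f' τ < 0) : StrictAntiOn f (Icc 0 δ) := by
  refine strictAntiOn_of_deriv_neg (convex_Icc _ _)
    (fun τ _ => (h τ).continuousAt.continuousWithinAt) fun τ hτ => ?_
  rw [interior_Icc] at hτ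
  exact (h τ).deriv ▸ hneg τ hτ

lemma third_deriv_nonneg_of_nonneg (h₁ : ∀ τ, HasDerivAt f (f' τ) τ)
    (h₂ : ∀ τ, HasDerivAt f' (f'' τ) τ) (h₃ : HasDerivAt f'' c 0)
    (hf : f 0 = 0) (hf' : f' 0 = 0) (hf'' : f'' 0 = 0) (hnonneg : ∀ τ, 0 ≤ f τ) : 0 ≤ c := by
  by_contra! hc
  obtain ⟨δ, hδ, f''_neg⟩ := exists_forall_neg_of_hasDerivAt_neg h₃ hf'' hc
  have anti_f' : StrictAntiOn f' (Icc 0 δ) :=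
    strictAntiOn_Icc_of_hasDerivAt_neg h₂ fun τ hτ => f''_neg τ ⟨hτ.1, hτ.2.le⟩
  have anti_f : StrictAntiOn f (Icc 0 δ) := strictAntiOn_Icc_of_hasDerivAt_neg h₁ fun τ hτ =>
    hf' ▸ anti_f' ⟨le_rfl, hδ.le⟩ ⟨hτ.1.le, hτ.2.le⟩ hτ.1
  have hlt : f δ < f 0 := anti_f ⟨le_rfl, hδ.le⟩ ⟨hδ.le, le_rfl⟩ hδ
  exact (hnonneg δ).not_gt (hf ▸ hlt)

lemma third_deriv_eq_zero_of_nonneg (h₁ : ∀ τ, HasDerivAt f (f' τ) τ)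
    (h₂ : ∀ τ, HasDerivAt f' (f'' τ) τ) (h₃ : HasDerivAt f'' c 0)
    (hf : f 0 = 0) (hf' : f' 0 = 0) (hf'' : f'' 0 = 0) (hnonneg : ∀ τ, 0 ≤ f τ) : c = 0 := by
  have hc : 0 ≤ c := third_deriv_nonneg_of_nonneg h₁ h₂ h₃ hf hf' hf'' hnonneg
  have hreflected : 0 ≤ -c := by
    refine third_deriv_nonneg_of_nonneg (f := fun τ => f (-τ)) (f' := fun τ => -f' (-τ))
      (f'' := fun τ => f'' (-τ)) (fun τ => ?_) (fun τ => ?_) ?_ (by simpa) (by simpa) (by simpa)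
      fun τ => hnonneg (-τ)
    · simpa [Function.comp_def] using (h₁ (-τ)).comp τ (hasDerivAt_neg τ)
    · simpa [Function.comp_def] using ((h₂ (-τ)).comp τ (hasDerivAt_neg τ)).fun_neg
    · have h₃' : HasDerivAt f'' c (-0) := by simpa using h₃
      simpa [Function.comp_def] using h₃'.comp 0 (hasDerivAt_neg 0)
  linarith

end Taylor
/-! ### Orthogonal frames -/

section OrthogonalFrame

variable {H ι : Type*} [NormedAddCommGroup H] [InnerProductSpace ℝ H] [FiniteDimensional ℝ H]
  [Fintype ι] {b : ι → H}

lemma eq_sum_of_pairwise_orthogonal (hne : ∀ i, b i ≠ 0)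
    (horth : Pairwise fun i j => ⟪b i, b j⟫ = 0) (hcard : Fintype.card ι = Module.finrank ℝ H)
    (u : H) : u = ∑ i, (⟪u, b i⟫ / ⟪b i, b i⟫) • b i := by
  have hspan : Submodule.span ℝ (range b) = ⊤ :=
    (linearIndependent_of_ne_zero_of_inner_eq_zero hne horth).span_eq_top_of_card_eq_finrank' hcard
  rw [← sub_eq_zero, ← Submodule.mem_bot ℝ, ← Submodule.top_orthogonal_eq_bot, ← hspan,
    Submodule.mem_orthogonal']
  refine fun z hz => Submodule.span_induction ?_ (inner_zero_right _)
    (fun x y _ _ hx hy => by rw [inner_add_right, hx, hy, add_zero])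
    (fun c x _ hx => by rw [real_inner_smul_right, hx, mul_zero]) hz
  rintro _ ⟨j, rfl⟩
  have hj : ⟪b j, b j⟫ ≠ 0 := inner_self_ne_zero.2 (hne j)
  rw [inner_sub_left, sum_inner, Finset.sum_eq_single j, real_inner_smul_left,
    div_mul_cancel₀ _ hj, sub_self]
  · exact fun i _ hij => by rw [real_inner_smul_left, horth hij, mul_zero]
  · exact fun hmem => absurd (Finset.mem_univ j) hmem

lemma inner_eq_sum_of_pairwise_orthogonal (hne : ∀ i, b i ≠ 0)
    (horth : Pairwise fun i j => ⟪b i, b j⟫ = 0) (hcard : Fintype.card ι = Module.finrank ℝ H)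
    (u v : H) : ⟪u, v⟫ = ∑ i, ⟪u, b i⟫ * ⟪v, b i⟫ / ⟪b i, b i⟫ := by
  conv_lhs => rw [eq_sum_of_pairwise_orthogonal hne horth hcard u, sum_inner]
  exact Finset.sum_congr rfl fun i _ => by
    rw [real_inner_smul_left, real_inner_comm v, div_mul_eq_mul_div]

end OrthogonalFrame

/-! ### Conformal minimal immersions into the three-sphere -/

/-- `F` is a conformal minimal immersion of the plane into `S³` with conformal factor `E` and unit
normal field `N` (tangent to `S³`). The metric is `E (ds² + dt²)`, and minimality is the harmonic
map equation. -/
structure MinimalSurface (F N : ℝ × ℝ → E4) (E : ℝ × ℝ → ℝ) : Prop where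
  smooth : IsSmooth F
  smooth_normal : IsSmooth N
  factor_pos : ∀ p, 0 < E p
  inner_self : ∀ p, ⟪F p, F p⟫ = 1
  inner_normal_normal : ∀ p, ⟪N p, N p⟫ = 1
  inner_self_normal : ∀ p, ⟪F p, N p⟫ = 0
  inner_normal_dirDeriv : ∀ p v, ⟪N p, dirDeriv v F p⟫ = 0
  conformal : ∀ p v w, ⟪dirDeriv v F p, dirDeriv w F p⟫ = E p * (v.1 * w.1 + v.2 * w.2)
  laplacian : ∀ p, ∂₁ (∂₁ F) p + ∂₂ (∂₂ F) p = (-(2 * E p)) • F p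

/-- The second fundamental form of `F` with respect to the normal field `N`, as a function of the
base point. -/
def secondForm (F N : ℝ × ℝ → E4) (v w p : ℝ × ℝ) : ℝ := ⟪dirDeriv v (dirDeriv w F) p, N p⟫

lemma secondForm_comm {F : ℝ × ℝ → E4} (hF : IsSmooth F) (N : ℝ × ℝ → E4) (v w : ℝ × ℝ) :
    secondForm F N v w = secondForm F N w v := by
  funext p
  rw [secondForm, dirDeriv_comm hF, secondForm]

lemma secondForm_eq_coordinates {F : ℝ × ℝ → E4} (hF : IsSmooth F) (N : ℝ × ℝ → E4)
    (v w p : ℝ × ℝ) : secondForm F N v w p = v.1 * w.1 * secondForm F N (1, 0) (1, 0) p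
      + (v.1 * w.2 + v.2 * w.1) * secondForm F N (1, 0) (0, 1) p
      + v.2 * w.2 * secondForm F N (0, 1) (0, 1) p := by
  simp only [secondForm, dirDeriv_dirDeriv_eq_coordinates hF v w, inner_add_left,
    real_inner_smul_left]

lemma smooth_secondForm {F N : ℝ × ℝ → E4} (hF : IsSmooth F) (hN : IsSmooth N) (v w : ℝ × ℝ) :
    IsSmooth (secondForm F N v w) :=
  ((hF.dirDeriv w).dirDeriv v).inner ℝ hN

namespace MinimalSurface

variable {F N : ℝ × ℝ → E4} {E : ℝ × ℝ → ℝ}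

lemma smooth_factor (S : MinimalSurface F N E) : IsSmooth E := by
  have hE : E = fun p => ⟪∂₁ F p, ∂₁ F p⟫ :=
    funext fun p => by rw [S.conformal]; simp
  rw [hE]
  exact (S.smooth.dirDeriv _).inner ℝ (S.smooth.dirDeriv _)

lemma norm_eq_one (S : MinimalSurface F N E) (p : ℝ × ℝ) : ‖F p‖ = 1 := by
  rw [norm_eq_sqrt_real_inner, S.inner_self, sqrt_one]

lemma inner_normal_self (S : MinimalSurface F N E) (p : ℝ × ℝ) : ⟪N p, F p⟫ = 0 := by
  rw [real_inner_comm, S.inner_self_normal]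

lemma inner_dirDeriv_normal (S : MinimalSurface F N E) (p v : ℝ × ℝ) :
    ⟪dirDeriv v F p, N p⟫ = 0 := by
  rw [real_inner_comm, S.inner_normal_dirDeriv]

lemma inner_self_dirDeriv (S : MinimalSurface F N E) (p v : ℝ × ℝ) :
    ⟪F p, dirDeriv v F p⟫ = 0 := by
  have h := dirDeriv_inner (p := p) S.smooth.differentiableAt S.smooth.differentiableAt v
  rw [dirDeriv_eq_zero_of_forall_eq S.inner_self, real_inner_comm (F p)] at h
  linarith

lemma inner_dirDeriv_self (S : MinimalSurface F N E) (p v : ℝ × ℝ) :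
    ⟪dirDeriv v F p, F p⟫ = 0 := by
  rw [real_inner_comm, S.inner_self_dirDeriv]

lemma inner_dirDeriv_dirDeriv_self (S : MinimalSurface F N E) (p v w : ℝ × ℝ) :
    ⟪dirDeriv v (dirDeriv w F) p, F p⟫ = -(E p * (v.1 * w.1 + v.2 * w.2)) := by
  have h := dirDeriv_inner (p := p) (S.smooth.dirDeriv w).differentiableAt
    S.smooth.differentiableAt v
  rw [dirDeriv_eq_zero_of_forall_eq (S.inner_dirDeriv_self · w), S.conformal] at h
  linarith

lemma inner_dirDeriv_dirDeriv_dirDeriv (S : MinimalSurface F N E) (p u v w : ℝ × ℝ) :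
    2 * ⟪dirDeriv u (dirDeriv v F) p, dirDeriv w F p⟫ = dirDeriv u E p * (v.1 * w.1 + v.2 * w.2)
      + dirDeriv v E p * (u.1 * w.1 + u.2 * w.2) - dirDeriv w E p * (u.1 * v.1 + u.2 * v.2) := by
  -- Koszul's formula: the derivatives of the metric, cyclically combined.
  have metric : ∀ a b c, dirDeriv a E p * (b.1 * c.1 + b.2 * c.2)
      = ⟪dirDeriv a (dirDeriv b F) p, dirDeriv c F p⟫
        + ⟪dirDeriv a (dirDeriv c F) p, dirDeriv b F p⟫ := fun a b c => by
    have h := dirDeriv_inner (p := p) (S.smooth.dirDeriv b).differentiableAt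
      (S.smooth.dirDeriv c).differentiableAt a
    have hE := dirDeriv_const_mul (p := p) (b.1 * c.1 + b.2 * c.2)
      S.smooth_factor.differentiableAt a
    simp only [S.conformal, mul_comm (E _)] at h
    rw [mul_comm, ← hE, h, real_inner_comm (dirDeriv b F p)]
  rw [metric u v w, metric v u w, metric w u v, dirDeriv_comm S.smooth v u,
    dirDeriv_comm S.smooth w u, dirDeriv_comm S.smooth w v]
  ring

lemma inner_eq_frame (S : MinimalSurface F N E) (p : ℝ × ℝ) (u v : E4) :
    ⟪u, v⟫ = ⟪u, F p⟫ * ⟪v, F p⟫ + ⟪u, N p⟫ * ⟪v, N p⟫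
      + (⟪u, ∂₁ F p⟫ * ⟪v, ∂₁ F p⟫ + ⟪u, ∂₂ F p⟫ * ⟪v, ∂₂ F p⟫) / E p := by
  have hE := (S.factor_pos p).ne'
  set b := ![F p, N p, ∂₁ F p, ∂₂ F p] with hb
  have hself : ∀ i, ⟪b i, b i⟫ = ![1, 1, E p, E p] i := by
    intro i
    fin_cases i <;>
      simp [hb, S.inner_self, S.inner_normal_normal, S.conformal, -inner_self_eq_norm_sq_to_K]
  have hne : ∀ i, b i ≠ 0 := fun i => by
    rw [← inner_self_ne_zero (𝕜 := ℝ), hself]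
    fin_cases i <;> simp [hE]
  have horth : Pairwise fun i j => ⟪b i, b j⟫ = 0 := by
    intro i j hij
    fin_cases i <;> fin_cases j <;>
      simp_all [S.inner_self_normal, S.inner_normal_self, S.inner_self_dirDeriv,
        S.inner_dirDeriv_self, S.inner_normal_dirDeriv, S.inner_dirDeriv_normal, S.conformal]
  rw [inner_eq_sum_of_pairwise_orthogonal hne horth (by simp) u v]
  simp only [hself, Fin.sum_univ_four]
  simp [hb, add_div, add_assoc]

lemma ext_frame (S : MinimalSurface F N E) {p : ℝ × ℝ} {u v : E4} (hF : ⟪u, F p⟫ = ⟪v, F p⟫)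
    (hN : ⟪u, N p⟫ = ⟪v, N p⟫) (h₁ : ⟪u, ∂₁ F p⟫ = ⟪v, ∂₁ F p⟫)
    (h₂ : ⟪u, ∂₂ F p⟫ = ⟪v, ∂₂ F p⟫) : u = v :=
  ext_inner_right ℝ fun z => by
    rw [S.inner_eq_frame p u z, S.inner_eq_frame p v z, hF, hN, h₁, h₂]

lemma exists_dirDeriv_eq (S : MinimalSurface F N E) {p : ℝ × ℝ} {z : E4} (hF : ⟪z, F p⟫ = 0)
    (hN : ⟪z, N p⟫ = 0) : ∃ b, dirDeriv b F p = z := by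
  have hE := (S.factor_pos p).ne'
  refine ⟨(⟪z, ∂₁ F p⟫ / E p, ⟪z, ∂₂ F p⟫ / E p), S.ext_frame (p := p) ?_ ?_ ?_ ?_⟩
  · rw [S.inner_dirDeriv_self, hF]
  · rw [S.inner_dirDeriv_normal, hN]
  all_goals simp [S.conformal, mul_div_cancel₀ _ hE]

lemma secondForm_trace (S : MinimalSurface F N E) (p : ℝ × ℝ) :
    secondForm F N (0, 1) (0, 1) p = -secondForm F N (1, 0) (1, 0) p := by
  rw [eq_neg_iff_add_eq_zero, add_comm, secondForm, secondForm, ← inner_add_left, S.laplacian,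
    real_inner_smul_left, S.inner_self_normal, mul_zero]

/-! ### The structure equations -/

lemma inner_dirDeriv_normal_normal (S : MinimalSurface F N E) (p v : ℝ × ℝ) :
    ⟪dirDeriv v N p, N p⟫ = 0 := by
  have h := dirDeriv_inner (p := p) S.smooth_normal.differentiableAt
    S.smooth_normal.differentiableAt v
  rw [dirDeriv_eq_zero_of_forall_eq S.inner_normal_normal, real_inner_comm (dirDeriv v N p)] at h
  linarith

lemma inner_dirDeriv_normal_self (S : MinimalSurface F N E) (p v : ℝ × ℝ) :
    ⟪dirDeriv v N p, F p⟫ = 0 := by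
  have h := dirDeriv_inner (p := p) S.smooth_normal.differentiableAt S.smooth.differentiableAt v
  rw [dirDeriv_eq_zero_of_forall_eq S.inner_normal_self, S.inner_normal_dirDeriv] at h
  linarith

lemma inner_dirDeriv_normal_dirDeriv (S : MinimalSurface F N E) (p v w : ℝ × ℝ) :
    ⟪dirDeriv v N p, dirDeriv w F p⟫ = -secondForm F N v w p := by
  have h := dirDeriv_inner (p := p) S.smooth_normal.differentiableAt
    (S.smooth.dirDeriv w).differentiableAt v
  rw [dirDeriv_eq_zero_of_forall_eq (S.inner_normal_dirDeriv · w),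
    real_inner_comm (dirDeriv v (dirDeriv w F) p)] at h
  rw [secondForm]
  linarith

lemma weingarten (S : MinimalSurface F N E) (p v : ℝ × ℝ) :
    dirDeriv v N p = (-(secondForm F N v (1, 0) p / E p)) • ∂₁ F p
      + (-(secondForm F N v (0, 1) p / E p)) • ∂₂ F p := by
  have hE := (S.factor_pos p).ne'
  apply S.ext_frame (p := p) <;>
    simp only [inner_add_left, real_inner_smul_left, S.inner_dirDeriv_self, S.inner_dirDeriv_normal,
      S.inner_dirDeriv_normal_self, S.inner_dirDeriv_normal_normal,
      S.inner_dirDeriv_normal_dirDeriv, S.conformal]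
  all_goals field_simp; ring

lemma inner_dirDeriv_dirDeriv_diag (S : MinimalSurface F N E) (p w : ℝ × ℝ) :
    ⟪∂₂ (dirDeriv w F) p, ∂₂ F p⟫ = ⟪∂₁ (dirDeriv w F) p, ∂₁ F p⟫ := by
  have h₁ := S.inner_dirDeriv_dirDeriv_dirDeriv p (1, 0) w (1, 0)
  have h₂ := S.inner_dirDeriv_dirDeriv_dirDeriv p (0, 1) w (0, 1)
  simp only at h₁ h₂
  linarith

lemma inner_dirDeriv_dirDeriv_antidiag (S : MinimalSurface F N E) (p w : ℝ × ℝ) :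
    ⟪∂₂ (dirDeriv w F) p, ∂₁ F p⟫ = -⟪∂₁ (dirDeriv w F) p, ∂₂ F p⟫ := by
  have h₁ := S.inner_dirDeriv_dirDeriv_dirDeriv p (1, 0) w (0, 1)
  have h₂ := S.inner_dirDeriv_dirDeriv_dirDeriv p (0, 1) w (1, 0)
  simp only at h₁ h₂
  linarith

lemma codazzi (S : MinimalSurface F N E) (w p : ℝ × ℝ) :
    ∂₂ (secondForm F N (1, 0) w) p = ∂₁ (secondForm F N (0, 1) w) p := by
  have hderiv : ∀ u v, dirDeriv u (secondForm F N v w) p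
      = ⟪dirDeriv u (dirDeriv v (dirDeriv w F)) p, N p⟫
        + ⟪dirDeriv v (dirDeriv w F) p, dirDeriv u N p⟫ := fun u v =>
    dirDeriv_inner ((S.smooth.dirDeriv w).dirDeriv v).differentiableAt
      S.smooth_normal.differentiableAt u
  rw [hderiv, hderiv, dirDeriv_comm (S.smooth.dirDeriv w), S.weingarten, S.weingarten]
  simp only [inner_add_right, real_inner_smul_right, secondForm_comm S.smooth N (0, 1) (1, 0),
    S.secondForm_trace, S.inner_dirDeriv_dirDeriv_diag, S.inner_dirDeriv_dirDeriv_antidiag]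
  ring

lemma hopf_cauchyRiemann_left (S : MinimalSurface F N E) (p : ℝ × ℝ) :
    ∂₂ (secondForm F N (1, 0) (1, 0)) p = ∂₁ (secondForm F N (1, 0) (0, 1)) p := by
  rw [S.codazzi, secondForm_comm S.smooth N (0, 1)]

lemma hopf_cauchyRiemann_right (S : MinimalSurface F N E) (p : ℝ × ℝ) :
    ∂₂ (secondForm F N (1, 0) (0, 1)) p = -∂₁ (secondForm F N (1, 0) (1, 0)) p := by
  rw [S.codazzi, funext S.secondForm_trace, dirDeriv_neg]

lemma divergence_secondForm (S : MinimalSurface F N E) (w p : ℝ × ℝ) :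
    ∂₁ (secondForm F N (1, 0) w) p + ∂₂ (secondForm F N (0, 1) w) p = 0 := by
  have hsmooth := fun v : ℝ × ℝ => smooth_secondForm S.smooth S.smooth_normal (1, 0) v
  have h₁ : secondForm F N (1, 0) w = fun q =>
      w.1 * secondForm F N (1, 0) (1, 0) q + w.2 * secondForm F N (1, 0) (0, 1) q :=
    funext fun q => by rw [secondForm_eq_coordinates S.smooth]; simp
  have h₂ : secondForm F N (0, 1) w = fun q =>
      w.1 * secondForm F N (1, 0) (0, 1) q + -w.2 * secondForm F N (1, 0) (1, 0) q :=
    funext fun q => by rw [secondForm_eq_coordinates S.smooth, S.secondForm_trace]; simp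
  have hdiff : ∀ (c : ℝ) (v : ℝ × ℝ),
      DifferentiableAt ℝ (fun q => c * secondForm F N (1, 0) v q) p :=
    fun c v => (hsmooth v).differentiableAt.const_mul c
  rw [h₁, h₂, dirDeriv_add (hdiff _ _) (hdiff _ _), dirDeriv_add (hdiff _ _) (hdiff _ _)]
  simp only [dirDeriv_const_mul _ (hsmooth _).differentiableAt, S.hopf_cauchyRiemann_left,
    S.hopf_cauchyRiemann_right]
  ring

lemma laplacian_normal (S : MinimalSurface F N E) (p : ℝ × ℝ) :
    ∂₁ (∂₁ N) p + ∂₂ (∂₂ N) p = (-(2 * (secondForm F N (1, 0) (1, 0) p ^ 2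
      + secondForm F N (1, 0) (0, 1) p ^ 2) / E p)) • N p := by
  have hE := (S.factor_pos p).ne'
  have hparts : ∀ {g : ℝ × ℝ → E4}, IsSmooth g → ∀ v, ⟪dirDeriv v (dirDeriv v N) p, g p⟫
      = dirDeriv v (fun q => ⟪dirDeriv v N q, g q⟫) p - ⟪dirDeriv v N p, dirDeriv v g p⟫ :=
    fun hg v => by
      rw [dirDeriv_inner (S.smooth_normal.dirDeriv v).differentiableAt hg.differentiableAt]
      ring
  have htangent : ∀ w, ⟪∂₁ (∂₁ N) p + ∂₂ (∂₂ N) p, dirDeriv w F p⟫ = 0 := fun w => by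
    rw [inner_add_left, hparts (S.smooth.dirDeriv w), hparts (S.smooth.dirDeriv w)]
    simp only [S.inner_dirDeriv_normal_dirDeriv, dirDeriv_neg]
    rw [S.weingarten p (1, 0), S.weingarten p (0, 1), ← sub_eq_zero]
    simp only [inner_add_left, real_inner_smul_left, real_inner_comm _ (dirDeriv _ F p),
      secondForm_comm S.smooth N (0, 1) (1, 0), S.secondForm_trace,
      S.inner_dirDeriv_dirDeriv_diag, S.inner_dirDeriv_dirDeriv_antidiag]
    linear_combination -S.divergence_secondForm w p
  apply S.ext_frame (p := p)
  · rw [inner_add_left, hparts S.smooth, hparts S.smooth]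
    simp only [S.inner_dirDeriv_normal_self, S.inner_dirDeriv_normal_dirDeriv, S.secondForm_trace,
      dirDeriv_eq_zero_of_forall_eq (fun _ => rfl), real_inner_smul_left, S.inner_normal_self]
    ring
  · rw [inner_add_left, hparts S.smooth_normal, hparts S.smooth_normal]
    simp only [S.inner_dirDeriv_normal_normal, dirDeriv_eq_zero_of_forall_eq (fun _ => rfl),
      real_inner_smul_left, S.inner_normal_normal]
    rw [S.weingarten p (1, 0), S.weingarten p (0, 1)]
    simp only [inner_add_left, inner_add_right, real_inner_smul_left, real_inner_smul_right,
      S.conformal, secondForm_comm S.smooth N (0, 1) (1, 0), S.secondForm_trace]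
    field_simp
    ring
  · rw [htangent, real_inner_smul_left, S.inner_normal_dirDeriv, mul_zero]
  · rw [htangent, real_inner_smul_left, S.inner_normal_dirDeriv, mul_zero]

lemma half_laplacian_factor (S : MinimalSurface F N E) (p : ℝ × ℝ) :
    (∂₁ (∂₁ E) p + ∂₂ (∂₂ E) p) / 2
      = ⟪∂₁ (∂₂ F) p, ∂₁ (∂₂ F) p⟫ - ⟪∂₁ (∂₁ F) p, ∂₂ (∂₂ F) p⟫ := by
  have smooth₂ := S.smooth.dirDeriv (0, 1)
  have h₁ : ∂₁ E = fun q => -2 * ⟪∂₂ (∂₂ F) q, ∂₁ F q⟫ := funext fun q => by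
    linarith [S.inner_dirDeriv_dirDeriv_dirDeriv q (0, 1) (0, 1) (1, 0)]
  have h₂ : ∂₂ E = fun q => 2 * ⟪∂₁ (∂₂ F) q, ∂₁ F q⟫ := funext fun q => by
    linarith [S.inner_dirDeriv_dirDeriv_dirDeriv q (1, 0) (0, 1) (1, 0)]
  have hinner := fun v w : ℝ × ℝ => dirDeriv_inner (p := p)
    (smooth₂.dirDeriv v).differentiableAt (S.smooth.dirDeriv (1, 0)).differentiableAt w
  have hdiff : ∀ v : ℝ × ℝ, DifferentiableAt ℝ (fun q => ⟪dirDeriv v (∂₂ F) q, ∂₁ F q⟫) p :=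
    fun v => (smooth₂.dirDeriv v).differentiableAt.inner ℝ
      (S.smooth.dirDeriv (1, 0)).differentiableAt
  rw [h₁, h₂, dirDeriv_const_mul _ (hdiff _), dirDeriv_const_mul _ (hdiff _), hinner, hinner,
    dirDeriv_comm smooth₂ (0, 1) (1, 0), dirDeriv_comm S.smooth (0, 1) (1, 0),
    real_inner_comm (∂₁ (∂₁ F) p)]
  ring

lemma gauss (S : MinimalSurface F N E) (p : ℝ × ℝ) :
    E p * (∂₁ (∂₁ E) p + ∂₂ (∂₂ E) p) - (∂₁ E p ^ 2 + ∂₂ E p ^ 2)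
      = 2 * (secondForm F N (1, 0) (1, 0) p ^ 2 + secondForm F N (1, 0) (0, 1) p ^ 2) * E p
        - 2 * E p ^ 3 := by
  have hE := (S.factor_pos p).ne'
  have koszul : ∀ u v w, ⟪dirDeriv u (dirDeriv v F) p, dirDeriv w F p⟫
      = (dirDeriv u E p * (v.1 * w.1 + v.2 * w.2) + dirDeriv v E p * (u.1 * w.1 + u.2 * w.2)
        - dirDeriv w E p * (u.1 * v.1 + u.2 * v.2)) / 2 := fun u v w => by
    linarith [S.inner_dirDeriv_dirDeriv_dirDeriv p u v w]
  have hnormal : ∀ u v, ⟪dirDeriv u (dirDeriv v F) p, N p⟫ = secondForm F N u v p :=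
    fun u v => rfl
  have hlap := S.half_laplacian_factor p
  rw [S.inner_eq_frame p (∂₁ (∂₂ F) p), S.inner_eq_frame p (∂₁ (∂₁ F) p)] at hlap
  simp only [S.inner_dirDeriv_dirDeriv_self, koszul, hnormal, S.secondForm_trace] at hlap
  field_simp at hlap
  linear_combination (1 / 2) * hlap

lemma smooth_log_factor (S : MinimalSurface F N E) : IsSmooth fun p => log (E p) :=
  S.smooth_factor.log fun p => (S.factor_pos p).ne'

lemma dirDeriv_log_factor (S : MinimalSurface F N E) (p v : ℝ × ℝ) :
    dirDeriv v (fun q => log (E q)) p = (E p)⁻¹ * dirDeriv v E p :=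
  dirDeriv_real_comp (hasDerivAt_log (S.factor_pos p).ne') S.smooth_factor.differentiableAt v

lemma laplacian_log_factor (S : MinimalSurface F N E) (p : ℝ × ℝ) :
    ∂₁ (∂₁ fun q => log (E q)) p + ∂₂ (∂₂ fun q => log (E q)) p
      = 2 * (secondForm F N (1, 0) (1, 0) p ^ 2 + secondForm F N (1, 0) (0, 1) p ^ 2) / E p
        - 2 * E p := by
  have hE := (S.factor_pos p).ne'
  have hfactor : ∀ v, dirDeriv v E = fun q => E q * dirDeriv v (fun r => log (E r)) q :=
    fun v => funext fun q => by
      rw [S.dirDeriv_log_factor, mul_inv_cancel_left₀ (S.factor_pos q).ne']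
  have hsecond : ∀ v, dirDeriv v (dirDeriv v E) p
      = E p * dirDeriv v (dirDeriv v fun q => log (E q)) p + dirDeriv v E p ^ 2 / E p := fun v => by
    conv_lhs => rw [hfactor v, dirDeriv_mul S.smooth_factor.differentiableAt
      (S.smooth_log_factor.dirDeriv v).differentiableAt, S.dirDeriv_log_factor]
    field_simp
  have hgauss := S.gauss p
  rw [hsecond, hsecond] at hgauss
  field_simp at hgauss ⊢
  apply mul_left_cancel₀ hE
  linear_combination hgauss

end MinimalSurface

/-! ### Variations of a two-point pairing -/

section PairingVariation

variable {P H : Type*} [NormedAddCommGroup P] [NormedSpace ℝ P] [NormedAddCommGroup H]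
  [InnerProductSpace ℝ H] {Φ : P → ℝ} {G F : P → H} {x y : P}

lemma hasDerivAt_pairing_line (hΦ : IsSmooth Φ) (hG : IsSmooth G) (hF : IsSmooth F)
    (x y a b : P) (τ : ℝ) :
    HasDerivAt (fun τ : ℝ => Φ (x + τ • a) + ⟪G (x + τ • a), F (y + τ • b)⟫)
      (dirDeriv a Φ (x + τ • a) + (⟪G (x + τ • a), dirDeriv b F (y + τ • b)⟫
        + ⟪dirDeriv a G (x + τ • a), F (y + τ • b)⟫)) τ :=
  (hasDerivAt_comp_line (fun _ => hΦ.differentiableAt) x a τ).fun_add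
    ((hasDerivAt_comp_line (fun _ => hG.differentiableAt) x a τ).inner ℝ
      (hasDerivAt_comp_line (fun _ => hF.differentiableAt) y b τ))

lemma first_variation_pairing (hΦ : IsSmooth Φ) (hG : IsSmooth G) (hF : IsSmooth F)
    (hmin : ∀ p q, Φ x + ⟪G x, F y⟫ ≤ Φ p + ⟪G p, F q⟫) (a b : P) :
    dirDeriv a Φ x + ⟪dirDeriv a G x, F y⟫ + ⟪G x, dirDeriv b F y⟫ = 0 := by
  have hderiv := hasDerivAt_pairing_line hΦ hG hF x y a b 0
  have hlocal : IsLocalMin (fun τ : ℝ => Φ (x + τ • a) + ⟪G (x + τ • a), F (y + τ • b)⟫) 0 :=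
    Eventually.of_forall fun τ => by simpa using hmin (x + τ • a) (y + τ • b)
  have hzero := hlocal.hasDerivAt_eq_zero hderiv
  simp only [zero_smul, add_zero] at hzero
  linarith

lemma second_variation_pairing (hΦ : IsSmooth Φ) (hG : IsSmooth G) (hF : IsSmooth F)
    (hmin : ∀ p q, Φ x + ⟪G x, F y⟫ ≤ Φ p + ⟪G p, F q⟫) (a b : P) :
    0 ≤ dirDeriv a (dirDeriv a Φ) x + ⟪dirDeriv a (dirDeriv a G) x, F y⟫
      + 2 * ⟪dirDeriv a G x, dirDeriv b F y⟫ + ⟪G x, dirDeriv b (dirDeriv b F) y⟫ := by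
  have hsecond := (hasDerivAt_pairing_line (hΦ.dirDeriv a) (hG.dirDeriv a) hF x y a b 0).fun_add
    (hasDerivAt_pairing_line (Φ := fun _ => 0) contDiff_const hG (hF.dirDeriv b) x y a b 0)
  have hfirst : ∀ τ, HasDerivAt
      (fun τ : ℝ => Φ (x + τ • a) + ⟪G (x + τ • a), F (y + τ • b)⟫)
      (dirDeriv a Φ (x + τ • a) + ⟪dirDeriv a G (x + τ • a), F (y + τ • b)⟫
        + (0 + ⟪G (x + τ • a), dirDeriv b F (y + τ • b)⟫)) τ := fun τ => by
    convert hasDerivAt_pairing_line hΦ hG hF x y a b τ using 1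
    ring
  have hnonneg := second_deriv_nonneg_of_forall_le hfirst hsecond fun τ => by
    simpa using hmin (x + τ • a) (y + τ • b)
  rw [dirDeriv_eq_zero_of_forall_eq (fun _ => rfl)] at hnonneg
  simp only [zero_smul, add_zero] at hnonneg
  linarith

end PairingVariation

/-! ### Brendle's two-point function -/

/-- The vector `N - Φ F`; for `Φ > 0` it is a negative multiple of the centre of the geodesic ball
of curvature `Φ` which touches the surface from the side of `-N`. -/
def tiltedNormal (F N : ℝ × ℝ → E4) (Φ : ℝ × ℝ → ℝ) (x : ℝ × ℝ) : E4 := N x - Φ x • F x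

/-- Brendle's function `Φ x (1 - ⟪F x, F y⟫) + ⟪N x, F y⟫`. It is nonnegative in `y` exactly when
the surface stays outside the ball of curvature `Φ x` touching it at `F x`. -/
def twoPoint (F N : ℝ × ℝ → E4) (Φ : ℝ × ℝ → ℝ) (x y : ℝ × ℝ) : ℝ :=
  Φ x + ⟪tiltedNormal F N Φ x, F y⟫

/-- The two-point function is everywhere nonnegative and vanishes at `(x, y)`, off the diagonal of
the surface: the touching ball at `F x` touches the surface again at `F y`. -/
structure IsContact (F N : ℝ × ℝ → E4) (Φ : ℝ × ℝ → ℝ) (x y : ℝ × ℝ) : Prop where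
  nonneg : ∀ p q, 0 ≤ twoPoint F N Φ p q
  eq_zero : twoPoint F N Φ x y = 0
  ne : F x ≠ F y

lemma twoPoint_eq (F N : ℝ × ℝ → E4) (Φ : ℝ × ℝ → ℝ) (x y : ℝ × ℝ) :
    twoPoint F N Φ x y = Φ x * (1 - ⟪F x, F y⟫) + ⟪N x, F y⟫ := by
  rw [twoPoint, tiltedNormal, inner_sub_left, real_inner_smul_left]
  ring

lemma reflection_orthogonal_singleton_apply {H : Type*} [NormedAddCommGroup H]
    [InnerProductSpace ℝ H] (u z : H) :
    (ℝ ∙ u)ᗮ.reflection z = z - (2 * (⟪u, z⟫ / ⟪u, u⟫)) • u := by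
  rw [Submodule.reflection_orthogonal_apply, Submodule.reflection_singleton_apply,
    real_inner_self_eq_norm_sq, RCLike.ofReal_real_eq_id, id, two_smul, mul_smul, two_smul]
  abel

lemma sq_add_sq_eq_of_orthogonal {a b c d : ℝ} (hnorm : a ^ 2 + b ^ 2 = c ^ 2 + d ^ 2)
    (horth : a * c + b * d = 0) : a ^ 2 + c ^ 2 = b ^ 2 + d ^ 2 ∧ a * b + c * d = 0 := by
  have hsum : (a ^ 2 + c ^ 2 - (b ^ 2 + d ^ 2)) ^ 2 + (2 * (a * b + c * d)) ^ 2 = 0 := by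
    calc _ = (a ^ 2 + b ^ 2 - (c ^ 2 + d ^ 2)) ^ 2 + (2 * (a * c + b * d)) ^ 2 := by ring
      _ = 0 := by rw [hnorm, horth]; ring
  rw [add_eq_zero_iff_of_nonneg (sq_nonneg _) (sq_nonneg _), sq_eq_zero_iff, sq_eq_zero_iff] at hsum
  exact ⟨sub_eq_zero.1 hsum.1, (mul_eq_zero.1 hsum.2).resolve_left two_ne_zero⟩

namespace MinimalSurface

variable {F N : ℝ × ℝ → E4} {E : ℝ × ℝ → ℝ} {Φ : ℝ × ℝ → ℝ} {x y : ℝ × ℝ}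

lemma one_sub_inner_nonneg (S : MinimalSurface F N E) (x y : ℝ × ℝ) : 0 ≤ 1 - ⟪F x, F y⟫ :=
  sub_nonneg.2 ((real_inner_le_norm _ _).trans (by simp [S.norm_eq_one]))

lemma one_sub_inner_pos (S : MinimalSurface F N E) (h : F x ≠ F y) : 0 < 1 - ⟪F x, F y⟫ :=
  sub_pos.2 ((inner_lt_one_iff_real_of_norm_eq_one (S.norm_eq_one x) (S.norm_eq_one y)).2 h)

lemma reflection_self (S : MinimalSurface F N E) (x y : ℝ × ℝ) :
    (ℝ ∙ (F x - F y))ᗮ.reflection (F x) = F y :=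
  Submodule.reflection_sub (by rw [S.norm_eq_one, S.norm_eq_one])

lemma inner_sub_sub (S : MinimalSurface F N E) (x y : ℝ × ℝ) :
    ⟪F x - F y, F x - F y⟫ = 2 * (1 - ⟪F x, F y⟫) := by
  simp only [inner_sub_left, inner_sub_right, S.inner_self, real_inner_comm (F x) (F y)]
  ring

lemma secondForm_add_secondForm_eq_zero (S : MinimalSurface F N E) (p : ℝ × ℝ) {b c : ℝ × ℝ}
    (hnorm : b.1 ^ 2 + b.2 ^ 2 = c.1 ^ 2 + c.2 ^ 2) (horth : b.1 * c.1 + b.2 * c.2 = 0) :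
    secondForm F N b b p + secondForm F N c c p = 0 := by
  obtain ⟨hdiag, hoff⟩ := sq_add_sq_eq_of_orthogonal hnorm horth
  rw [secondForm_eq_coordinates S.smooth N b, secondForm_eq_coordinates S.smooth N c,
    S.secondForm_trace]
  linear_combination secondForm F N (1, 0) (1, 0) p * hdiag
    + 2 * secondForm F N (1, 0) (0, 1) p * hoff

lemma smooth_tiltedNormal (S : MinimalSurface F N E) (hΦ : IsSmooth Φ) :
    IsSmooth (tiltedNormal F N Φ) :=
  S.smooth_normal.sub (hΦ.smul S.smooth)

lemma dirDeriv_tiltedNormal (S : MinimalSurface F N E) (hΦ : IsSmooth Φ) (v : ℝ × ℝ) :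
    dirDeriv v (tiltedNormal F N Φ) =
      fun p => dirDeriv v N p - (Φ p • dirDeriv v F p + dirDeriv v Φ p • F p) := by
  funext p
  rw [← dirDeriv_smul hΦ.differentiableAt S.smooth.differentiableAt]
  exact dirDeriv_sub S.smooth_normal.differentiableAt
    (hΦ.differentiableAt.smul S.smooth.differentiableAt) v

lemma dirDeriv_dirDeriv_tiltedNormal (S : MinimalSurface F N E) (hΦ : IsSmooth Φ)
    (v p : ℝ × ℝ) : dirDeriv v (dirDeriv v (tiltedNormal F N Φ)) p
      = dirDeriv v (dirDeriv v N) p - (Φ p • dirDeriv v (dirDeriv v F) p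
        + (2 * dirDeriv v Φ p) • dirDeriv v F p + dirDeriv v (dirDeriv v Φ) p • F p) := by
  have hΦ₀ := hΦ.differentiableAt (p := p)
  have hΦ₁ := (hΦ.dirDeriv v).differentiableAt (p := p)
  have hF₀ := S.smooth.differentiableAt (p := p)
  have hF₁ := (S.smooth.dirDeriv v).differentiableAt (p := p)
  rw [S.dirDeriv_tiltedNormal hΦ, dirDeriv_sub (S.smooth_normal.dirDeriv v).differentiableAt
    ((hΦ₀.fun_smul hF₁).fun_add (hΦ₁.fun_smul hF₀)), dirDeriv_add (hΦ₀.fun_smul hF₁)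
    (hΦ₁.fun_smul hF₀), dirDeriv_smul hΦ₀ hF₁, dirDeriv_smul hΦ₁ hF₀]
  module

lemma inner_dirDeriv_tiltedNormal_self (S : MinimalSurface F N E) (hΦ : IsSmooth Φ)
    (v p : ℝ × ℝ) : ⟪dirDeriv v (tiltedNormal F N Φ) p, F p⟫ = -dirDeriv v Φ p := by
  simp only [S.dirDeriv_tiltedNormal hΦ, inner_sub_left, inner_add_left, real_inner_smul_left,
    S.inner_dirDeriv_normal_self, S.inner_dirDeriv_self, S.inner_self]
  ring

lemma inner_dirDeriv_tiltedNormal_dirDeriv (S : MinimalSurface F N E) (hΦ : IsSmooth Φ)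
    (v w p : ℝ × ℝ) : ⟪dirDeriv v (tiltedNormal F N Φ) p, dirDeriv w F p⟫
      = -secondForm F N v w p - Φ p * E p * (v.1 * w.1 + v.2 * w.2) := by
  simp only [S.dirDeriv_tiltedNormal hΦ, inner_sub_left, inner_add_left, real_inner_smul_left,
    S.inner_dirDeriv_normal_dirDeriv, S.conformal, S.inner_self_dirDeriv]
  ring

lemma inner_laplacian_tiltedNormal (S : MinimalSurface F N E) (hΦ : IsSmooth Φ)
    (p : ℝ × ℝ) (z : E4) :
    ⟪∂₁ (∂₁ (tiltedNormal F N Φ)) p, z⟫ + ⟪∂₂ (∂₂ (tiltedNormal F N Φ)) p, z⟫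
      = -(2 * (secondForm F N (1, 0) (1, 0) p ^ 2 + secondForm F N (1, 0) (0, 1) p ^ 2) / E p)
          * ⟪N p, z⟫ + 2 * E p * Φ p * ⟪F p, z⟫
        - 2 * (∂₁ Φ p * ⟪∂₁ F p, z⟫ + ∂₂ Φ p * ⟪∂₂ F p, z⟫)
        - (∂₁ (∂₁ Φ) p + ∂₂ (∂₂ Φ) p) * ⟪F p, z⟫ := by
  have hF := congrArg (fun u => ⟪u, z⟫) (S.laplacian p)
  have hN := congrArg (fun u => ⟪u, z⟫) (S.laplacian_normal p)
  simp only [inner_add_left, real_inner_smul_left] at hF hN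
  simp only [S.dirDeriv_dirDeriv_tiltedNormal hΦ, inner_sub_left, inner_add_left,
    real_inner_smul_left]
  linear_combination hN - Φ p * hF

end MinimalSurface

namespace IsContact

variable {F N : ℝ × ℝ → E4} {E : ℝ × ℝ → ℝ} {Φ : ℝ × ℝ → ℝ} {x y : ℝ × ℝ}

lemma isMin (h : IsContact F N Φ x y) (p q : ℝ × ℝ) :
    Φ x + ⟪tiltedNormal F N Φ x, F y⟫ ≤ Φ p + ⟪tiltedNormal F N Φ p, F q⟫ :=
  h.eq_zero.trans_le (h.nonneg p q)

lemma inner_tiltedNormal (h : IsContact F N Φ x y) :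
    ⟪tiltedNormal F N Φ x, F y⟫ = -Φ x :=
  eq_neg_of_add_eq_zero_right h.eq_zero

lemma inner_tiltedNormal_dirDeriv (h : IsContact F N Φ x y) (S : MinimalSurface F N E)
    (hΦ : IsSmooth Φ) (b : ℝ × ℝ) : ⟪tiltedNormal F N Φ x, dirDeriv b F y⟫ = 0 := by
  simpa using first_variation_pairing hΦ (S.smooth_tiltedNormal hΦ) S.smooth h.isMin 0 b

lemma inner_dirDeriv_tiltedNormal (h : IsContact F N Φ x y) (S : MinimalSurface F N E)
    (hΦ : IsSmooth Φ) (a : ℝ × ℝ) :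
    ⟪dirDeriv a (tiltedNormal F N Φ) x, F y⟫ = -dirDeriv a Φ x := by
  have := first_variation_pairing hΦ (S.smooth_tiltedNormal hΦ) S.smooth h.isMin a 0
  rw [dirDeriv_zero, inner_zero_right] at this
  linarith

lemma dirDeriv_mul_one_sub_inner (h : IsContact F N Φ x y) (S : MinimalSurface F N E)
    (hΦ : IsSmooth Φ) (a : ℝ × ℝ) : dirDeriv a Φ x * (1 - ⟪F x, F y⟫)
      = Φ x * ⟪dirDeriv a F x, F y⟫ - ⟪dirDeriv a N x, F y⟫ := by
  have := h.inner_dirDeriv_tiltedNormal S hΦ a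
  simp only [S.dirDeriv_tiltedNormal hΦ, inner_sub_left, inner_add_left,
    real_inner_smul_left] at this
  linarith

-- `F y` and `N y` span the orthogonal complement of the tangent plane of the surface at `y`.
lemma inner_tiltedNormal_eq (h : IsContact F N Φ x y) (S : MinimalSurface F N E)
    (hΦ : IsSmooth Φ) (z : E4) : ⟪tiltedNormal F N Φ x, z⟫
      = -Φ x * ⟪z, F y⟫ + ⟪tiltedNormal F N Φ x, N y⟫ * ⟪z, N y⟫ := by
  rw [S.inner_eq_frame y, h.inner_tiltedNormal, h.inner_tiltedNormal_dirDeriv S hΦ,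
    h.inner_tiltedNormal_dirDeriv S hΦ]
  ring

lemma reflection_normal (h : IsContact F N Φ x y) (S : MinimalSurface F N E) :
    (ℝ ∙ (F x - F y))ᗮ.reflection (N x) = tiltedNormal F N Φ x + Φ x • F y := by
  have hgap := (S.one_sub_inner_pos h.ne).ne'
  have hinner : ⟪F x - F y, N x⟫ = Φ x * (1 - ⟪F x, F y⟫) := by
    have := h.eq_zero
    rw [twoPoint_eq, real_inner_comm (F y) (N x)] at this
    rw [inner_sub_left, S.inner_self_normal]
    linarith
  rw [reflection_orthogonal_singleton_apply, hinner, S.inner_sub_sub,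
    mul_div_mul_right _ _ hgap, mul_div_cancel₀ _ two_ne_zero, tiltedNormal]
  module

lemma exists_dirDeriv_eq_reflection (h : IsContact F N Φ x y) (S : MinimalSurface F N E)
    (hΦ : IsSmooth Φ) (a : ℝ × ℝ) :
    ∃ b, dirDeriv b F y = (ℝ ∙ (F x - F y))ᗮ.reflection (dirDeriv a F x) := by
  set R := (ℝ ∙ (F x - F y))ᗮ.reflection
  have hRN : ∀ z, ⟪R (N x), z⟫ = ⟪tiltedNormal F N Φ x, N y⟫ * ⟪z, N y⟫ := fun z => by
    rw [h.reflection_normal S, inner_add_left, h.inner_tiltedNormal_eq S hΦ z,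
      real_inner_smul_left, real_inner_comm z]
    ring
  have hne : ⟪tiltedNormal F N Φ x, N y⟫ ≠ 0 := fun hzero => by
    have := hRN (R (N x))
    rw [R.inner_map_map, S.inner_normal_normal, hzero, zero_mul] at this
    exact one_ne_zero this
  refine S.exists_dirDeriv_eq ?_ ((mul_eq_zero.1 ?_).resolve_left hne)
  · rw [← S.reflection_self x y, R.inner_map_map, S.inner_dirDeriv_self]
  · rw [← hRN, R.inner_map_map, S.inner_normal_dirDeriv]

lemma inner_dirDeriv_tiltedNormal_reflection (h : IsContact F N Φ x y) (S : MinimalSurface F N E)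
    (hΦ : IsSmooth Φ) (a : ℝ × ℝ) (z : E4) :
    ⟪dirDeriv a (tiltedNormal F N Φ) x, (ℝ ∙ (F x - F y))ᗮ.reflection z⟫
      = ⟪dirDeriv a (tiltedNormal F N Φ) x, z⟫ := by
  have hfixed : ⟪dirDeriv a (tiltedNormal F N Φ) x, F x - F y⟫ = 0 := by
    rw [inner_sub_right, S.inner_dirDeriv_tiltedNormal_self hΦ, h.inner_dirDeriv_tiltedNormal S hΦ,
      sub_self]
  rw [reflection_orthogonal_singleton_apply, inner_sub_right, real_inner_smul_right, hfixed,
    mul_zero, sub_zero]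

lemma inner_tiltedNormal_dirDeriv_dirDeriv (h : IsContact F N Φ x y) (S : MinimalSurface F N E)
    (hΦ : IsSmooth Φ) (b : ℝ × ℝ) : ⟪tiltedNormal F N Φ x, dirDeriv b (dirDeriv b F) y⟫
      = Φ x * ⟪dirDeriv b F y, dirDeriv b F y⟫
        + ⟪tiltedNormal F N Φ x, N y⟫ * secondForm F N b b y := by
  rw [h.inner_tiltedNormal_eq S hΦ, S.inner_dirDeriv_dirDeriv_self, S.conformal, secondForm]
  ring

-- The trace over `a` of the second variation along `(a, b)`, where `b` is the image of `a` under
-- the reflection which exchanges `F x` and `F y`.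
lemma laplacian_nonneg (h : IsContact F N Φ x y) (S : MinimalSurface F N E) (hΦ : IsSmooth Φ) :
    0 ≤ (∂₁ (∂₁ Φ) x + ∂₂ (∂₂ Φ) x
        + (2 * (secondForm F N (1, 0) (1, 0) x ^ 2 + secondForm F N (1, 0) (0, 1) x ^ 2) / E x
          - 2 * E x) * Φ x) * (1 - ⟪F x, F y⟫)
      - 2 * (∂₁ Φ x * ⟪∂₁ F x, F y⟫ + ∂₂ Φ x * ⟪∂₂ F x, F y⟫) := by
  obtain ⟨b, hb⟩ := h.exists_dirDeriv_eq_reflection S hΦ (1, 0)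
  obtain ⟨c, hc⟩ := h.exists_dirDeriv_eq_reflection S hΦ (0, 1)
  have hEy := (S.factor_pos y).ne'
  have hbb : ⟪dirDeriv b F y, dirDeriv b F y⟫ = E x := by
    rw [hb, LinearIsometryEquiv.inner_map_map, S.conformal]; simp
  have hcc : ⟪dirDeriv c F y, dirDeriv c F y⟫ = E x := by
    rw [hc, LinearIsometryEquiv.inner_map_map, S.conformal]; simp
  have hbc : ⟪dirDeriv b F y, dirDeriv c F y⟫ = 0 := by
    rw [hb, hc, LinearIsometryEquiv.inner_map_map, S.conformal]; simp
  have htrace : secondForm F N b b y + secondForm F N c c y = 0 := by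
    refine S.secondForm_add_secondForm_eq_zero y (mul_left_cancel₀ hEy ?_) ?_
    · rw [S.conformal] at hbb hcc
      linarith
    · rw [S.conformal] at hbc
      exact (mul_eq_zero.1 hbc).resolve_left hEy
  have hvar := second_variation_pairing hΦ (S.smooth_tiltedNormal hΦ) S.smooth h.isMin
  have hvar₁ := hvar (1, 0) b
  have hvar₂ := hvar (0, 1) c
  rw [h.inner_tiltedNormal_dirDeriv_dirDeriv S hΦ, hbb, hb,
    h.inner_dirDeriv_tiltedNormal_reflection S hΦ,
    S.inner_dirDeriv_tiltedNormal_dirDeriv hΦ] at hvar₁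
  rw [h.inner_tiltedNormal_dirDeriv_dirDeriv S hΦ, hcc, hc,
    h.inner_dirDeriv_tiltedNormal_reflection S hΦ,
    S.inner_dirDeriv_tiltedNormal_dirDeriv hΦ, S.secondForm_trace] at hvar₂
  have hlap := S.inner_laplacian_tiltedNormal hΦ x (F y)
  have hzero := h.eq_zero
  rw [twoPoint_eq] at hzero
  linear_combination hvar₁ + hvar₂ + hlap + ⟪tiltedNormal F N Φ x, N y⟫ * htrace
    - (2 * (secondForm F N (1, 0) (1, 0) x ^ 2 + secondForm F N (1, 0) (0, 1) x ^ 2) / E x) * hzero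

end IsContact

/-! ### Existence of contact pairs -/

lemma exists_max_ratio_of_compact {X : Type*} [TopologicalSpace X] {C : Set X} {f g : X → ℝ}
    (hC : IsCompact C) (hf : Continuous f) (hg : Continuous g) (hg₀ : ∀ z, 0 ≤ g z)
    (hzero : ∀ z ∈ C, g z = 0 → ∀ᶠ z' in 𝓝 z, f z' ≤ g z')
    {z₀ : X} (hz₀ : z₀ ∈ C) (hgz₀ : 0 < g z₀) (hfz₀ : g z₀ ≤ f z₀) :
    ∃ K, 1 ≤ K ∧ (∀ z ∈ C, f z ≤ K * g z) ∧ ∃ z ∈ C, 0 < g z ∧ f z = K * g z := by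
  let W : Set X := {z | ∀ᶠ z' in 𝓝 z, f z' ≤ g z'}
  have hW : IsOpen W := isOpen_setOfPred_eventually_nhds
  have hpos : ∀ z ∈ insert z₀ (C \ W), 0 < g z := by
    rintro z (rfl | ⟨hzC, hzW⟩)
    · exact hgz₀
    · exact (hg₀ z).lt_of_ne fun h => hzW (hzero z hzC h.symm)
  obtain ⟨z₁, hz₁, hmax⟩ := ((hC.diff hW).insert z₀).exists_isMaxOn (insert_nonempty _ _)
    (hf.continuousOn.div hg.continuousOn fun z hz => (hpos z hz).ne')
  have hone : 1 ≤ f z₁ / g z₁ := ((one_le_div hgz₀).2 hfz₀).trans (hmax (mem_insert _ _))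
  refine ⟨f z₁ / g z₁, hone, fun z hz => ?_, z₁, insert_subset hz₀ sdiff_subset hz₁, hpos z₁ hz₁,
    (div_mul_cancel₀ _ (hpos z₁ hz₁).ne').symm⟩
  by_cases hzW : z ∈ W
  · exact hzW.self_of_nhds.trans (le_mul_of_one_le_left (hg₀ z) hone)
  · exact (div_le_iff₀ (hpos z (.inr ⟨hz, hzW⟩))).1 (hmax (.inr ⟨hz, hzW⟩))

lemma quadratic_nonneg_of_discrim_nonpos {A B C : ℝ} (hA : 0 < A) (h : B ^ 2 ≤ A * C) (u v : ℝ) :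
    0 ≤ u * u * A + (u * v + v * u) * B + v * v * C := by
  refine nonneg_of_mul_nonneg_right (a := A) ?_ hA
  linear_combination sq_nonneg (u * A + v * B) + mul_nonneg (sq_nonneg v) (sub_nonneg.2 h)

/-- The periods of the immersion `F` act cocompactly on the plane, they preserve the normal field
`N`, and `F` is injective modulo its periods. -/
structure IsEmbeddedTorus (F N : ℝ × ℝ → E4) : Prop where
  periodic_of_eq : ∀ p q, F p = F q → Function.Periodic F (q - p)
  periodic_normal : ∀ l, Function.Periodic F l → Function.Periodic N l
  cocompact : ∃ K : Set (ℝ × ℝ), IsCompact K ∧ ∀ x, ∃ l, Function.Periodic F l ∧ x + l ∈ K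

namespace MinimalSurface

variable {F N : ℝ × ℝ → E4} {E : ℝ × ℝ → ℝ} {Φ : ℝ × ℝ → ℝ} {x y : ℝ × ℝ}

lemma periodic_factor (S : MinimalSurface F N E) {l : ℝ × ℝ} (hl : Function.Periodic F l) :
    Function.Periodic E l := fun p => by
  have h := S.conformal (p + l) (1, 0) (1, 0)
  rw [periodic_dirDeriv hl, S.conformal] at h
  simpa using h.symm

lemma inner_tiltedNormal_self (S : MinimalSurface F N E) (Φ : ℝ × ℝ → ℝ) (p : ℝ × ℝ) :
    ⟪tiltedNormal F N Φ p, F p⟫ = -Φ p := by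
  simp [tiltedNormal, inner_sub_left, real_inner_smul_left, S.norm_eq_one, S.inner_normal_self]

lemma inner_tiltedNormal_dirDeriv (S : MinimalSurface F N E) (Φ : ℝ × ℝ → ℝ) (v p : ℝ × ℝ) :
    ⟪tiltedNormal F N Φ p, dirDeriv v F p⟫ = 0 := by
  simp [tiltedNormal, inner_sub_left, real_inner_smul_left, S.inner_self_dirDeriv,
    S.inner_normal_dirDeriv]

lemma inner_tiltedNormal_dirDeriv_dirDeriv (S : MinimalSurface F N E) (Φ : ℝ × ℝ → ℝ)
    (v w p : ℝ × ℝ) : ⟪tiltedNormal F N Φ p, dirDeriv v (dirDeriv w F) p⟫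
      = secondForm F N v w p + Φ p * E p * (v.1 * w.1 + v.2 * w.2) := by
  rw [tiltedNormal, inner_sub_left, real_inner_smul_left, real_inner_comm, ← secondForm,
    real_inner_comm, S.inner_dirDeriv_dirDeriv_self]
  ring

lemma continuous_tiltedNormal (S : MinimalSurface F N E) (hΦ : Continuous Φ) :
    Continuous (tiltedNormal F N Φ) :=
  S.smooth_normal.continuous.sub (hΦ.smul S.smooth.continuous)

lemma twoPoint_nonneg_of_segment (S : MinimalSurface F N E)
    (hconvex : ∀ τ ∈ Icc (0 : ℝ) 1, 0 ≤ ⟪tiltedNormal F N Φ x,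
      dirDeriv (y - x) (dirDeriv (y - x) F) (x + τ • (y - x))⟫) :
    0 ≤ twoPoint F N Φ x y := by
  set v := y - x with hv
  have hline {G : ℝ × ℝ → E4} (hG : IsSmooth G) := hasDerivAt_inner_comp_line
    (fun _ => hG.differentiableAt) (tiltedNormal F N Φ x) x v
  have hend := nonneg_of_second_deriv_nonneg (fun τ => (hline S.smooth τ).const_add (Φ x))
    (hline (S.smooth.dirDeriv v))
    (by simp [S.inner_tiltedNormal_self]) (by simp [S.inner_tiltedNormal_dirDeriv]) hconvex
  simpa [hv, twoPoint] using hend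

lemma eventually_twoPoint_nonneg (S : MinimalSurface F N E) (hΦ : Continuous Φ) {p : ℝ × ℝ}
    (hpos : 0 < Φ p) (hcurv : secondForm F N (1, 0) (1, 0) p ^ 2
      + secondForm F N (1, 0) (0, 1) p ^ 2 < (Φ p * E p) ^ 2) :
    ∀ᶠ z : (ℝ × ℝ) × ℝ × ℝ in 𝓝 (p, p), 0 ≤ twoPoint F N Φ z.1 z.2 := by
  let Q (v w : ℝ × ℝ) (z : (ℝ × ℝ) × ℝ × ℝ) : ℝ :=
    ⟪tiltedNormal F N Φ z.1, dirDeriv v (dirDeriv w F) z.2⟫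
  have hQ (v w : ℝ × ℝ) : Continuous (Q v w) :=
    ((S.continuous_tiltedNormal hΦ).comp continuous_fst).inner
      (((S.smooth.dirDeriv w).dirDeriv v).continuous.comp continuous_snd)
  have hopen : IsOpen {z | 0 < Q (1, 0) (1, 0) z ∧
      Q (1, 0) (0, 1) z ^ 2 < Q (1, 0) (1, 0) z * Q (0, 1) (0, 1) z} :=
    (isOpen_lt continuous_const (hQ _ _)).inter
      (isOpen_lt ((hQ _ _).pow 2) ((hQ _ _).mul (hQ _ _)))
  have hΦE : 0 < Φ p * E p := mul_pos hpos (S.factor_pos p)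
  obtain ⟨r, hr, hball⟩ := Metric.isOpen_iff.1 hopen (p, p) (by
    simp only [Q, mem_ofPred_eq, S.inner_tiltedNormal_dirDeriv_dirDeriv, S.secondForm_trace]
    exact ⟨by nlinarith [abs_lt.1 (abs_lt_of_sq_lt_sq (a := secondForm F N (1, 0) (1, 0) p)
      (by nlinarith) hΦE.le)], by linarith⟩)
  rw [← ball_prod_same] at hball
  filter_upwards [Metric.ball_mem_nhds (p, p) hr] with z hz
  rw [← ball_prod_same] at hz
  refine S.twoPoint_nonneg_of_segment fun τ hτ => ?_
  obtain ⟨hA, hdisc⟩ :=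
    hball (mk_mem_prod hz.1 ((convex_ball p r).add_smul_sub_mem hz.1 hz.2 hτ))
  rw [dirDeriv_dirDeriv_eq_coordinates S.smooth, inner_add_right, inner_add_right,
    real_inner_smul_right, real_inner_smul_right, real_inner_smul_right]
  exact quadratic_nonneg_of_discrim_nonpos hA hdisc.le _ _

lemma eventually_twoPoint_nonneg_of_eq (S : MinimalSurface F N E) (hF : IsEmbeddedTorus F N)
    (hΦ : Continuous Φ) (hpos : 0 < Φ x) (hcurv : secondForm F N (1, 0) (1, 0) x ^ 2
      + secondForm F N (1, 0) (0, 1) x ^ 2 < (Φ x * E x) ^ 2) (hxy : F x = F y) :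
    ∀ᶠ z : (ℝ × ℝ) × ℝ × ℝ in 𝓝 (x, y), 0 ≤ twoPoint F N Φ z.1 z.2 := by
  have hl := hF.periodic_of_eq y x hxy.symm
  have hshift : Tendsto (fun z : (ℝ × ℝ) × ℝ × ℝ => (z.1, z.2 + (x - y))) (𝓝 (x, y))
      (𝓝 (x, x)) :=
    (show Continuous fun z : (ℝ × ℝ) × ℝ × ℝ => (z.1, z.2 + (x - y)) by fun_prop).tendsto' _ _
      (by simp)
  filter_upwards [hshift.eventually (S.eventually_twoPoint_nonneg hΦ hpos hcurv)] with z hz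
  rwa [twoPoint, hl] at hz

lemma exists_max_contact_ratio_of_compact (S : MinimalSurface F N E) (hF : IsEmbeddedTorus F N)
    (hΦ : Continuous Φ) (hpos : ∀ p, 0 < Φ p) (hcurv : ∀ p, secondForm F N (1, 0) (1, 0) p ^ 2
      + secondForm F N (1, 0) (0, 1) p ^ 2 < (Φ p * E p) ^ 2)
    {B : Set (ℝ × ℝ)} (hB : IsCompact B) (hx : x ∈ B) (hy : y ∈ B)
    (hxy : F x ≠ F y) (hneg : twoPoint F N Φ x y ≤ 0) :
    ∃ K, 1 ≤ K ∧ (∀ p ∈ B, ∀ q ∈ B, 0 ≤ twoPoint F N (fun r => K * Φ r) p q) ∧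
      ∃ p q, twoPoint F N (fun r => K * Φ r) p q = 0 ∧ F p ≠ F q := by
  have hF₀ := S.smooth.continuous
  have hN₀ := S.smooth_normal.continuous
  simp only [twoPoint_eq] at hneg
  obtain ⟨K, hK, hbound, z, -, hDz, hz⟩ := exists_max_ratio_of_compact
    (g := fun z => Φ z.1 * (1 - ⟪F z.1, F z.2⟫)) (f := fun z => -⟪N z.1, F z.2⟫)
    (hB.prod hB) (by fun_prop) (by fun_prop)
    (fun z => mul_nonneg (hpos _).le (S.one_sub_inner_nonneg _ _))
    (fun z _ hz => by
      have hFz : F z.1 = F z.2 := by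
        by_contra hne
        exact (mul_pos (hpos z.1) (S.one_sub_inner_pos hne)).ne' hz
      filter_upwards [S.eventually_twoPoint_nonneg_of_eq hF hΦ (hpos z.1) (hcurv z.1) hFz]
        with z' hz'
      rw [twoPoint_eq] at hz'
      exact neg_le_iff_add_nonneg.2 hz')
    (mk_mem_prod hx hy) (mul_pos (hpos x) (S.one_sub_inner_pos hxy)) (by linarith)
  simp only [twoPoint_eq, mul_assoc]
  refine ⟨K, hK, fun p hp q hq => neg_le_iff_add_nonneg.1 (hbound (p, q) (mk_mem_prod hp hq)),
    z.1, z.2, by linarith, fun h => ?_⟩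
  simp [h, S.norm_eq_one] at hDz

theorem exists_isContact (S : MinimalSurface F N E) (hF : IsEmbeddedTorus F N)
    (hΦ : Continuous Φ) (hpos : ∀ p, 0 < Φ p) (hcurv : ∀ p, secondForm F N (1, 0) (1, 0) p ^ 2
      + secondForm F N (1, 0) (0, 1) p ^ 2 < (Φ p * E p) ^ 2)
    {B : Set (ℝ × ℝ)} (hB : IsCompact B)
    (htranslate : ∀ x, ∃ l, Function.Periodic F l ∧ x + l ∈ B ∧ Φ (x + l) ≤ Φ x)
    (hxy : F x ≠ F y) (hneg : twoPoint F N Φ x y ≤ 0) :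
    ∃ K, 1 ≤ K ∧ ∃ p q, IsContact F N (fun r => K * Φ r) p q := by
  have hreduce (x y : ℝ × ℝ) : ∃ x' ∈ B, ∃ y' ∈ B, F x' = F x ∧ F y' = F y ∧
      ∀ K, 0 ≤ K → twoPoint F N (fun r => K * Φ r) x' y' ≤ twoPoint F N (fun r => K * Φ r) x y := by
    obtain ⟨l, hl, hlB, hle⟩ := htranslate x
    obtain ⟨m, hm, hmB, -⟩ := htranslate y
    refine ⟨x + l, hlB, y + m, hmB, hl x, hm y, fun K hK => ?_⟩
    rw [twoPoint_eq, twoPoint_eq, hl, hm, hF.periodic_normal l hl]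
    gcongr
    exact S.one_sub_inner_nonneg x y
  obtain ⟨x₀, hx₀, y₀, hy₀, hFx, hFy, hle⟩ := hreduce x y
  have hneg₀ : twoPoint F N Φ x₀ y₀ ≤ 0 :=
    le_trans (by simpa only [one_mul] using hle 1 zero_le_one) hneg
  obtain ⟨K, hK, hnonneg, p, q, hzero, hne⟩ := S.exists_max_contact_ratio_of_compact hF hΦ hpos
    hcurv hB hx₀ hy₀ (hFx ▸ hFy ▸ hxy) hneg₀
  refine ⟨K, hK, p, q, fun x y => ?_, hzero, hne⟩
  obtain ⟨x', hx', y', hy', -, -, hle'⟩ := hreduce x y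
  exact (hnonneg x' hx' y' hy').trans (hle' K (zero_le_one.trans hK))

end MinimalSurface

/-! ### A strict barrier -/

/-- The square of the Euclidean distance in the plane; the metric of `ℝ × ℝ` is the sup metric. -/
def sqDist (p x : ℝ × ℝ) : ℝ := (x.1 - p.1) ^ 2 + (x.2 - p.2) ^ 2

/-- A radially increasing function centred at `p` with values in `[-ε, 0)`. -/
def gaussianWell (ε α : ℝ) (p x : ℝ × ℝ) : ℝ := -ε * exp (-α * sqDist p x)

section Barrier

variable {ε α r : ℝ} {p x y : ℝ × ℝ}

lemma sqDist_nonneg (p x : ℝ × ℝ) : 0 ≤ sqDist p x := by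
  unfold sqDist
  positivity

lemma smooth_sqDist (p : ℝ × ℝ) : IsSmooth (sqDist p) := by
  unfold sqDist IsSmooth
  fun_prop

lemma dist_le_sqrt_sqDist (p x : ℝ × ℝ) : dist x p ≤ √(sqDist p x) :=
  max_le (abs_le_sqrt (le_add_of_nonneg_right (sq_nonneg _)))
    (abs_le_sqrt (le_add_of_nonneg_left (sq_nonneg _)))

lemma isCompact_sqDist_le (p : ℝ × ℝ) (r : ℝ) : IsCompact {x | sqDist p x ≤ r} :=
  (isCompact_closedBall p √r).of_isClosed_subset
    (isClosed_le (smooth_sqDist p).continuous continuous_const)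
    fun x hx => (dist_le_sqrt_sqDist p x).trans (sqrt_le_sqrt hx)

lemma exists_forall_sqDist_le_mem {U : Set (ℝ × ℝ)} (hU : U ∈ 𝓝 p) :
    ∃ r, 0 < r ∧ ∀ x, sqDist p x ≤ r → x ∈ U := by
  obtain ⟨d, hd, hball⟩ := Metric.nhds_basis_closedBall.mem_iff.1 hU
  refine ⟨d ^ 2, by positivity, fun x hx => hball ?_⟩
  exact (dist_le_sqrt_sqDist p x).trans ((sqrt_le_sqrt hx).trans_eq (sqrt_sq hd.le))

lemma dirDeriv_sqDist (p v : ℝ × ℝ) :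
    dirDeriv v (sqDist p) = fun x => 2 * ((x.1 - p.1) * v.1 + (x.2 - p.2) * v.2) := by
  funext x
  have hcoord (a b c : ℝ) :
      HasDerivAt (fun τ : ℝ => (a + τ * c - b) ^ 2) (2 * ((a - b) * c)) 0 := by
    simpa [mul_assoc] using
      ((((hasDerivAt_id (0 : ℝ)).mul_const c).const_add a).sub_const b).fun_pow 2
  have hline : HasDerivAt (fun τ : ℝ => sqDist p (x + τ • v))
      (2 * ((x.1 - p.1) * v.1 + (x.2 - p.2) * v.2)) 0 := by
    simpa [sqDist, mul_add] using (hcoord x.1 p.1 v.1).fun_add (hcoord x.2 p.2 v.2)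
  have hderiv := hasDerivAt_comp_line (fun _ => (smooth_sqDist p).differentiableAt) x v 0
  simp only [zero_smul, add_zero] at hderiv
  exact hderiv.unique hline

lemma dirDeriv_dirDeriv_sqDist (p v x : ℝ × ℝ) :
    dirDeriv v (dirDeriv v (sqDist p)) x = 2 * (v.1 ^ 2 + v.2 ^ 2) := by
  have hline : HasDerivAt (fun τ : ℝ => dirDeriv v (sqDist p) (x + τ • v))
      (2 * (v.1 ^ 2 + v.2 ^ 2)) 0 := by
    have hcoord (a b c : ℝ) : HasDerivAt (fun τ : ℝ => (a + τ * c - b) * c) (c ^ 2) 0 := by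
      simpa [sq] using
        ((((hasDerivAt_id (0 : ℝ)).mul_const c).const_add a).sub_const b).mul_const c
    simpa [dirDeriv_sqDist] using
      ((hcoord x.1 p.1 v.1).fun_add (hcoord x.2 p.2 v.2)).const_mul 2
  have hderiv :=
    hasDerivAt_comp_line (fun _ => ((smooth_sqDist p).dirDeriv v).differentiableAt) x v 0
  simp only [zero_smul, add_zero] at hderiv
  exact hderiv.unique hline

lemma smooth_gaussianWell (ε α : ℝ) (p : ℝ × ℝ) : IsSmooth (gaussianWell ε α p) :=
  contDiff_const.mul (contDiff_const.mul (smooth_sqDist p)).exp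

lemma gaussianWell_neg (hε : 0 < ε) (α : ℝ) (p x : ℝ × ℝ) : gaussianWell ε α p x < 0 :=
  mul_neg_of_neg_of_pos (neg_neg_of_pos hε) (exp_pos _)

lemma neg_le_gaussianWell (hε : 0 ≤ ε) (hα : 0 ≤ α) (p x : ℝ × ℝ) :
    -ε ≤ gaussianWell ε α p x := by
  have hexp : exp (-α * sqDist p x) ≤ 1 :=
    exp_le_one_iff.2 (mul_nonpos_of_nonpos_of_nonneg (neg_nonpos.2 hα) (sqDist_nonneg p x))
  rw [gaussianWell, neg_mul, neg_le_neg_iff]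
  exact mul_le_of_le_one_right hε hexp

lemma gaussianWell_le (hε : 0 ≤ ε) (hα : 0 ≤ α) (h : sqDist p x ≤ sqDist p y) :
    gaussianWell ε α p x ≤ gaussianWell ε α p y := by
  have hexp : exp (-α * sqDist p y) ≤ exp (-α * sqDist p x) :=
    exp_le_exp.2 (mul_le_mul_of_nonpos_left h (neg_nonpos.2 hα))
  exact mul_le_mul_of_nonpos_left hexp (neg_nonpos.2 hε)

lemma dirDeriv_gaussianWell (ε α : ℝ) (p v : ℝ × ℝ) : dirDeriv v (gaussianWell ε α p)
    = fun x => -α * (gaussianWell ε α p x * dirDeriv v (sqDist p) x) := by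
  funext x
  have hexp : HasDerivAt (fun t => -ε * exp (-α * t)) (-ε * (exp (-α * sqDist p x) * -α))
      (sqDist p x) := by
    simpa using (((hasDerivAt_id (sqDist p x)).const_mul (-α)).exp).const_mul (-ε)
  have := dirDeriv_real_comp hexp (smooth_sqDist p).differentiableAt v
  rw [show gaussianWell ε α p = fun x => -ε * exp (-α * sqDist p x) from rfl, this]
  ring

lemma laplacian_gaussianWell (ε α : ℝ) (p x : ℝ × ℝ) :
    ∂₁ (∂₁ (gaussianWell ε α p)) x + ∂₂ (∂₂ (gaussianWell ε α p)) x
      = gaussianWell ε α p x * (4 * α) * (α * sqDist p x - 1) := by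
  have hwell := (smooth_gaussianWell ε α p).differentiableAt (p := x)
  have hdist (v : ℝ × ℝ) := ((smooth_sqDist p).dirDeriv v).differentiableAt (p := x)
  have hsecond (v : ℝ × ℝ) := dirDeriv_const_mul (-α) (hwell.fun_mul (hdist v)) v
  rw [dirDeriv_gaussianWell, dirDeriv_gaussianWell, hsecond, hsecond, dirDeriv_mul hwell (hdist _),
    dirDeriv_mul hwell (hdist _), dirDeriv_gaussianWell, dirDeriv_gaussianWell,
    dirDeriv_dirDeriv_sqDist, dirDeriv_dirDeriv_sqDist]
  simp only [dirDeriv_sqDist, sqDist]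
  ring

lemma gradient_sq_gaussianWell (ε α : ℝ) (p x : ℝ × ℝ) :
    ∂₁ (gaussianWell ε α p) x ^ 2 + ∂₂ (gaussianWell ε α p) x ^ 2
      = 4 * α * gaussianWell ε α p x ^ 2 * (α * sqDist p x) := by
  simp only [dirDeriv_gaussianWell, dirDeriv_sqDist, sqDist]
  ring

lemma gradient_sq_gaussianWell_le (hε : 0 < ε) (hε₁ : ε ≤ 1) (hα : 0 ≤ α)
    (hx : α * sqDist p x ≤ 1) :
    ∂₁ (gaussianWell ε α p) x ^ 2 + ∂₂ (gaussianWell ε α p) x ^ 2 ≤ 4 * α * ε := by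
  have hsq : gaussianWell ε α p x ^ 2 ≤ ε := by
    nlinarith [gaussianWell_neg hε α p x, neg_le_gaussianWell hε.le hα p x]
  rw [gradient_sq_gaussianWell]
  calc 4 * α * gaussianWell ε α p x ^ 2 * (α * sqDist p x)
      ≤ 4 * α * gaussianWell ε α p x ^ 2 := mul_le_of_le_one_right (by positivity) hx
    _ ≤ 4 * α * ε := by gcongr

lemma laplacian_gaussianWell_le (hε : 0 < ε) (hα : 0 ≤ α) (hx : α * sqDist p x ≤ 1) :
    ∂₁ (∂₁ (gaussianWell ε α p)) x + ∂₂ (∂₂ (gaussianWell ε α p)) x ≤ 4 * α * ε := by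
  have hdist : 0 ≤ α * sqDist p x := mul_nonneg hα (sqDist_nonneg p x)
  have hprod : -gaussianWell ε α p x * (1 - α * sqDist p x) ≤ ε * 1 :=
    mul_le_mul (by linarith [neg_le_gaussianWell hε.le hα p x]) (by linarith) (by linarith) hε.le
  rw [laplacian_gaussianWell]
  linear_combination 4 * α * hprod

lemma laplacian_gaussianWell_neg (hε : 0 < ε) (hα : 0 < α) (hx : 1 < α * sqDist p x) :
    ∂₁ (∂₁ (gaussianWell ε α p)) x + ∂₂ (∂₂ (gaussianWell ε α p)) x < 0 := by
  rw [laplacian_gaussianWell]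
  exact mul_neg_of_neg_of_pos
    (mul_neg_of_neg_of_pos (gaussianWell_neg hε α p x) (by positivity)) (by linarith)

lemma laplacian_gaussianWell_lt {c m u v : ℝ} (hε : 0 < ε) (hε₁ : ε ≤ 1) (hα : 0 < α) (hc : 0 < c)
    (hεm : ε * (16 * α * (1 + c)) ≤ c * m) (huv : α * sqDist p x ≤ 1 → m ≤ u ^ 2 + v ^ 2) :
    ∂₁ (∂₁ (gaussianWell ε α p)) x + ∂₂ (∂₂ (gaussianWell ε α p)) x
      < c * ((∂₁ (gaussianWell ε α p) x - u) ^ 2 + (∂₂ (gaussianWell ε α p) x - v) ^ 2) := by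
  rcases le_or_gt (α * sqDist p x) 1 with hx | hx
  · have hgrad := gradient_sq_gaussianWell_le hε hε₁ hα.le hx
    have hlap := laplacian_gaussianWell_le hε hα.le hx
    have hlower : m / 2 - 4 * α * ε ≤
        (∂₁ (gaussianWell ε α p) x - u) ^ 2 + (∂₂ (gaussianWell ε α p) x - v) ^ 2 := by
      linarith [huv hx, sq_nonneg (2 * ∂₁ (gaussianWell ε α p) x - u),
        sq_nonneg (2 * ∂₂ (gaussianWell ε α p) x - v)]
    have hpos : 0 < 4 * α * (1 + c) * ε := by positivity
    linarith [mul_le_mul_of_nonneg_left hlower hc.le]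
  · exact (laplacian_gaussianWell_neg hε hα hx).trans_le (by positivity)

theorem exists_strict_barrier {f : ℝ × ℝ → ℝ} (hf : IsSmooth f) {c η : ℝ} (hc : 0 < c)
    (hη : 0 < η) (hp : ¬(∂₁ f p = 0 ∧ ∂₂ f p = 0)) :
    ∃ ψ : ℝ × ℝ → ℝ, IsSmooth ψ ∧ (∀ x, -η ≤ ψ x ∧ ψ x ≤ 0) ∧
      (∀ x y, sqDist p x ≤ sqDist p y → ψ x ≤ ψ y) ∧
      ∀ x, ∂₁ (∂₁ ψ) x + ∂₂ (∂₂ ψ) x < c * ((∂₁ ψ x - ∂₁ f x) ^ 2 + (∂₂ ψ x - ∂₂ f x) ^ 2) := by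
  have hgrad : 0 < ∂₁ f p ^ 2 + ∂₂ f p ^ 2 := by
    by_contra! hle
    exact hp ⟨by nlinarith, by nlinarith⟩
  obtain ⟨m, hm, hmp⟩ := exists_between hgrad
  have hcont : Continuous fun x => ∂₁ f x ^ 2 + ∂₂ f x ^ 2 :=
    ((hf.dirDeriv _).continuous.pow 2).add ((hf.dirDeriv _).continuous.pow 2)
  obtain ⟨r, hr, hnear⟩ := exists_forall_sqDist_le_mem
    (hcont.continuousAt.eventually_const_lt hmp)
  obtain ⟨ε, hε, hεlt⟩ := exists_between
    (show 0 < min 1 (min η (c * m / (16 * r⁻¹ * (1 + c)))) by positivity)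
  simp only [lt_min_iff] at hεlt
  obtain ⟨hε₁, hεη, hεm⟩ := hεlt
  rw [lt_div_iff₀ (by positivity)] at hεm
  refine ⟨gaussianWell ε r⁻¹ p, smooth_gaussianWell _ _ _, fun x => ⟨?_, ?_⟩,
    fun x y => gaussianWell_le hε.le (by positivity), fun x => ?_⟩
  · exact (neg_le_neg hεη.le).trans (neg_le_gaussianWell hε.le (by positivity) p x)
  · exact (gaussianWell_neg hε _ p x).le
  · refine laplacian_gaussianWell_lt hε hε₁.le (by positivity) hc hεm.le fun hx => ?_
    exact (hnear x (by rwa [inv_mul_le_iff₀ hr, mul_one] at hx)).le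

end Barrier

/-! ### Surfaces with normalized Hopf differential -/

/-- A conformal minimal immersion in coordinates for which the second fundamental form is
`σ (ds² - dt²)` with a constant sign `σ = ±1`. -/
structure NormalizedSurface (F N : ℝ × ℝ → E4) (E : ℝ × ℝ → ℝ) (σ : ℝ) : Prop extends
    MinimalSurface F N E where
  sign_sq : σ ^ 2 = 1
  secondForm_eq : ∀ v w p, secondForm F N v w p = σ * (v.1 * w.1 - v.2 * w.2)

lemma dirDeriv_const_mul_exp {w : ℝ × ℝ → ℝ} (hw : IsSmooth w) (K : ℝ) (v : ℝ × ℝ) :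
    dirDeriv v (fun q => K * exp (w q)) = fun q => K * exp (w q) * dirDeriv v w q :=
  funext fun q => dirDeriv_real_comp ((hasDerivAt_exp (w q)).const_mul K) hw.differentiableAt v

lemma dirDeriv_dirDeriv_const_mul_exp {w : ℝ × ℝ → ℝ} (hw : IsSmooth w) (K : ℝ) (v p : ℝ × ℝ) :
    dirDeriv v (dirDeriv v fun q => K * exp (w q)) p
      = K * exp (w p) * (dirDeriv v w p ^ 2 + dirDeriv v (dirDeriv v w) p) := by
  have hexp : IsSmooth fun q => K * exp (w q) := contDiff_const.mul hw.exp
  rw [dirDeriv_const_mul_exp hw, dirDeriv_mul hexp.differentiableAt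
    (hw.dirDeriv v).differentiableAt, dirDeriv_const_mul_exp hw]
  ring

lemma sq_mul_sub_le_neg_div_mul {s k κ g q D : ℝ} (hs : s ^ 2 = 1) (hκ : 1 < κ) (hk : κ ≤ k)
    (hD : 0 ≤ D) (hq : (k + s) * q = k * g * D) :
    g ^ 2 * D - 2 * g * q ≤ -((κ - 1) / (κ + 1) * g ^ 2 * D) := by
  obtain ⟨hs₁, hs₂⟩ := abs_le.1 (sq_le_one_iff_abs_le_one s |>.1 hs.le)
  have hks : 0 < k + s := by linarith
  have hcoef : (κ - 1) / (κ + 1) ≤ (k - s) / (k + s) := by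
    rw [div_le_div_iff₀ (by linarith) hks]
    nlinarith
  have hvalue : g ^ 2 * D - 2 * g * q = -((k - s) / (k + s) * g ^ 2 * D) := by
    field_simp
    linear_combination -2 * g * hq
  rw [hvalue]
  gcongr

namespace NormalizedSurface

variable {F N : ℝ × ℝ → E4} {E w : ℝ × ℝ → ℝ} {σ K κ : ℝ} {x y : ℝ × ℝ}

lemma neg (S : NormalizedSurface F N E σ) : NormalizedSurface F (fun p => -N p) E (-σ) where
  smooth := S.smooth
  smooth_normal := S.smooth_normal.neg
  factor_pos := S.factor_pos
  inner_self := S.inner_self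
  inner_normal_normal p := by rw [inner_neg_neg, S.inner_normal_normal]
  inner_self_normal p := by rw [inner_neg_right, S.inner_self_normal, neg_zero]
  inner_normal_dirDeriv p v := by rw [inner_neg_left, S.inner_normal_dirDeriv, neg_zero]
  conformal := S.conformal
  laplacian := S.laplacian
  sign_sq := by rw [neg_sq, S.sign_sq]
  secondForm_eq v w p := by
    rw [neg_mul, ← S.secondForm_eq, secondForm, inner_neg_right, secondForm]

lemma secondForm_sq_add_sq (S : NormalizedSurface F N E σ) (p : ℝ × ℝ) :
    secondForm F N (1, 0) (1, 0) p ^ 2 + secondForm F N (1, 0) (0, 1) p ^ 2 = 1 := by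
  simp [S.secondForm_eq, S.sign_sq]

lemma dirDeriv_normal_left (S : NormalizedSurface F N E σ) (p : ℝ × ℝ) :
    ∂₁ N p = (-(σ / E p)) • ∂₁ F p := by
  rw [S.weingarten]
  simp [S.secondForm_eq]

lemma dirDeriv_normal_right (S : NormalizedSurface F N E σ) (p : ℝ × ℝ) :
    ∂₂ N p = (σ / E p) • ∂₂ F p := by
  rw [S.weingarten]
  simp [S.secondForm_eq, neg_div]

lemma gradient_sq_le_laplacian_of_isContact (S : NormalizedSurface F N E σ) (hw : IsSmooth w)
    (h : IsContact F N (fun p => K * exp (w p)) x y) (hκ : 1 < κ)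
    (hκx : κ ≤ K * exp (w x) * E x) :
    (κ - 1) / (κ + 1) * (∂₁ w x ^ 2 + ∂₂ w x ^ 2) ≤ ∂₁ (∂₁ w) x + ∂₂ (∂₂ w) x
      + (∂₁ (∂₁ fun p => log (E p)) x + ∂₂ (∂₂ fun p => log (E p)) x) := by
  have hΦ : IsSmooth fun p => K * exp (w p) := contDiff_const.mul hw.exp
  have hE := S.factor_pos x
  have hD : 0 < 1 - ⟪F x, F y⟫ := S.one_sub_inner_pos h.ne
  have hfirst := h.dirDeriv_mul_one_sub_inner S.toMinimalSurface hΦ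
  have hfirst₁ := hfirst (1, 0)
  have hfirst₂ := hfirst (0, 1)
  have hsecond := h.laplacian_nonneg S.toMinimalSurface hΦ
  rw [← S.laplacian_log_factor, dirDeriv_dirDeriv_const_mul_exp hw,
    dirDeriv_dirDeriv_const_mul_exp hw] at hsecond
  simp only [dirDeriv_const_mul_exp hw, S.dirDeriv_normal_left, S.dirDeriv_normal_right,
    real_inner_smul_left] at hfirst₁ hfirst₂ hsecond
  set Φ := K * exp (w x)
  set D := 1 - ⟪F x, F y⟫
  have hΦpos : 0 < Φ := pos_of_mul_pos_left (by linarith) hE.le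
  have hq₁ : (Φ * E x + σ) * ⟪∂₁ F x, F y⟫ = Φ * E x * ∂₁ w x * D := by
    field_simp at hfirst₁
    linarith
  have hq₂ : (Φ * E x + -σ) * ⟪∂₂ F x, F y⟫ = Φ * E x * ∂₂ w x * D := by
    field_simp at hfirst₂
    linarith
  have hest₁ := sq_mul_sub_le_neg_div_mul S.sign_sq hκ hκx hD.le hq₁
  have hest₂ := sq_mul_sub_le_neg_div_mul (s := -σ) (by rw [neg_sq, S.sign_sq]) hκ hκx hD.le hq₂
  refine le_of_mul_le_mul_left ?_ (mul_pos hΦpos hD)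
  linear_combination hsecond + Φ * hest₁ + Φ * hest₂

end NormalizedSurface

lemma IsEmbeddedTorus.neg {F N : ℝ × ℝ → E4} (hF : IsEmbeddedTorus F N) :
    IsEmbeddedTorus F fun p => -N p where
  periodic_of_eq := hF.periodic_of_eq
  periodic_normal l hl p := congrArg _ (hF.periodic_normal l hl p)
  cocompact := hF.cocompact

lemma IsEmbeddedTorus.exists_radial_reduction {F N : ℝ × ℝ → E4} (hF : IsEmbeddedTorus F N)
    (p : ℝ × ℝ) : ∃ B : Set (ℝ × ℝ), IsCompact B ∧
      ∀ x, ∃ l, Function.Periodic F l ∧ x + l ∈ B ∧ sqDist p (x + l) ≤ sqDist p x := by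
  obtain ⟨C, hC, hcover⟩ := hF.cocompact
  obtain ⟨ρ, hρ⟩ := (hC.image (smooth_sqDist p).continuous).bddAbove
  refine ⟨{x | sqDist p x ≤ ρ}, isCompact_sqDist_le p ρ, fun x => ?_⟩
  rcases le_or_gt (sqDist p x) ρ with hx | hx
  · exact ⟨0, fun q => by rw [add_zero], by simpa using hx, by rw [add_zero]⟩
  · obtain ⟨l, hl, hlC⟩ := hcover x
    have hle : sqDist p (x + l) ≤ ρ := hρ (mem_image_of_mem _ hlC)
    exact ⟨l, hl, hle, hle.trans hx.le⟩

namespace NormalizedSurface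

variable {F N : ℝ × ℝ → E4} {E : ℝ × ℝ → ℝ} {σ κ κ₁ : ℝ} {x y : ℝ × ℝ}

lemma exists_isContact_exp (S : NormalizedSurface F N E σ) (hF : IsEmbeddedTorus F N)
    {ψ : ℝ × ℝ → ℝ} (hψ : IsSmooth ψ) {p : ℝ × ℝ} (hψ₀ : ∀ q, ψ q ≤ 0)
    (hradial : ∀ q r, sqDist p q ≤ sqDist p r → ψ q ≤ ψ r)
    (hκ : 1 < κ) (hκ₁ : ∀ q, κ ≤ κ₁ * exp (ψ q))
    (hxy : F x ≠ F y) (hneg : twoPoint F N (fun q => κ₁ / E q) x y ≤ 0) :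
    ∃ K, κ₁ ≤ K ∧ ∃ q r, IsContact F N (fun s => K * exp (ψ s - log (E s))) q r := by
  have hκ₁pos : 0 < κ₁ := pos_of_mul_pos_left (by linarith [hκ₁ x]) (exp_pos (ψ x)).le
  have hE := S.factor_pos
  let Φ (q : ℝ × ℝ) : ℝ := κ₁ * exp (ψ q - log (E q))
  have hΦE (q : ℝ × ℝ) : Φ q * E q = κ₁ * exp (ψ q) := by
    have := (hE q).ne'
    simp only [Φ, exp_sub, exp_log (hE q)]
    field_simp
  have hΦ : Continuous Φ :=
    continuous_const.mul (hψ.continuous.sub S.smooth_log_factor.continuous).rexp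
  obtain ⟨B, hB, htranslate⟩ := hF.exists_radial_reduction p
  obtain ⟨K, hK, q, r, hcontact⟩ := S.exists_isContact hF hΦ
    (fun q => mul_pos hκ₁pos (exp_pos _))
    (fun q => by rw [S.secondForm_sq_add_sq, hΦE]; nlinarith [hκ₁ q]) hB
    (fun q => by
      obtain ⟨l, hl, hlB, hle⟩ := htranslate q
      refine ⟨l, hl, hlB, ?_⟩
      simp only [Φ, S.periodic_factor hl q]
      gcongr
      exact hradial _ _ hle)
    hxy (by
      refine le_trans ?_ hneg
      have hle : Φ x ≤ κ₁ / E x := by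
        rw [le_div_iff₀ (hE x), hΦE]
        exact mul_le_of_le_one_right hκ₁pos.le (exp_le_one_iff.2 (hψ₀ x))
      rw [twoPoint_eq, twoPoint_eq]
      gcongr
      exact S.one_sub_inner_nonneg x y)
  refine ⟨K * κ₁, le_mul_of_one_le_left hκ₁pos.le hK, q, r, ?_⟩
  simpa only [Φ, mul_assoc] using hcontact

lemma false_of_isContact_of_strict_barrier (S : NormalizedSurface F N E σ) {ψ : ℝ × ℝ → ℝ}
    (hψ : IsSmooth ψ) {K : ℝ} (h : IsContact F N (fun p => K * exp (ψ p - log (E p))) x y)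
    (hκ : 1 < κ) (hκx : κ ≤ K * exp (ψ x))
    (hbarrier : ∂₁ (∂₁ ψ) x + ∂₂ (∂₂ ψ) x < (κ - 1) / (κ + 1) *
      ((∂₁ ψ x - ∂₁ (fun p => log (E p)) x) ^ 2 + (∂₂ ψ x - ∂₂ (fun p => log (E p)) x) ^ 2)) :
    False := by
  have hlog := S.smooth_log_factor
  have hfirst (v : ℝ × ℝ) : dirDeriv v (fun p => ψ p - log (E p))
      = fun p => dirDeriv v ψ p - dirDeriv v (fun q => log (E q)) p :=
    funext fun p => dirDeriv_sub hψ.differentiableAt hlog.differentiableAt v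
  have hsecond (v : ℝ × ℝ) : dirDeriv v (dirDeriv v fun p => ψ p - log (E p)) x
      = dirDeriv v (dirDeriv v ψ) x - dirDeriv v (dirDeriv v fun q => log (E q)) x := by
    rw [hfirst]
    exact dirDeriv_sub (hψ.dirDeriv v).differentiableAt (hlog.dirDeriv v).differentiableAt v
  have hκ' : κ ≤ K * exp (ψ x - log (E x)) * E x := by
    rwa [exp_sub, exp_log (S.factor_pos x), mul_assoc, div_mul_cancel₀ _ (S.factor_pos x).ne']
  have hcontact := S.gradient_sq_le_laplacian_of_isContact (hψ.sub hlog) h hκ hκ'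
  rw [hsecond, hsecond] at hcontact
  simp only [hfirst] at hcontact
  linarith

lemma exists_one_lt_twoPoint_nonpos (S : NormalizedSurface F N E σ)
    (hneg : twoPoint F N (fun p => 1 / E p) x y < 0) :
    F x ≠ F y ∧ ∃ κ₁, 1 < κ₁ ∧ twoPoint F N (fun p => κ₁ / E p) x y ≤ 0 := by
  have hxy : F x ≠ F y := fun h => by
    simp [twoPoint_eq, ← h, S.norm_eq_one, S.inner_normal_self] at hneg
  have hD := S.one_sub_inner_pos hxy
  have hE := S.factor_pos x
  rw [twoPoint_eq] at hneg
  refine ⟨hxy, -⟪N x, F y⟫ * E x / (1 - ⟪F x, F y⟫), ?_, ?_⟩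
  · rw [one_lt_div hD]
    field_simp at hneg
    linarith
  · rw [twoPoint_eq]
    field_simp
    simp

theorem gradient_factor_eq_zero_or_twoPoint_nonneg (S : NormalizedSurface F N E σ)
    (hF : IsEmbeddedTorus F N) :
    (∀ p, ∂₁ E p = 0 ∧ ∂₂ E p = 0) ∨ ∀ x y, 0 ≤ twoPoint F N (fun p => 1 / E p) x y := by
  by_contra hcon
  simp only [not_or, not_forall, not_le] at hcon
  obtain ⟨⟨p, hp⟩, x, y, hneg⟩ := hcon
  obtain ⟨hxy, κ₁, hκ₁, hneg₁⟩ := S.exists_one_lt_twoPoint_nonpos hneg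
  obtain ⟨κ, hκ, hκκ₁⟩ := exists_between hκ₁
  have hratio : 1 < κ₁ / κ := (one_lt_div (by linarith)).2 hκκ₁
  have hlogp : ¬(∂₁ (fun q => log (E q)) p = 0 ∧ ∂₂ (fun q => log (E q)) p = 0) := by
    simpa [S.dirDeriv_log_factor, (S.factor_pos p).ne'] using hp
  obtain ⟨ψ, hψ, hbounds, hradial, hbarrier⟩ := exists_strict_barrier S.smooth_log_factor
    (show 0 < (κ - 1) / (κ + 1) from div_pos (by linarith) (by linarith)) (log_pos hratio) hlogp
  have hκψ (q : ℝ × ℝ) : κ ≤ κ₁ * exp (ψ q) := by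
    have hexp := exp_le_exp.2 (hbounds q).1
    rw [exp_neg, exp_log (by linarith), inv_div, div_le_iff₀ (by linarith)] at hexp
    linarith
  obtain ⟨K, hK, q, r, hcontact⟩ := S.exists_isContact_exp hF hψ (fun q => (hbounds q).2) hradial
    hκ hκψ hxy hneg₁
  exact S.false_of_isContact_of_strict_barrier hψ hcontact hκ
    ((hκψ q).trans (mul_le_mul_of_nonneg_right hK (exp_pos _).le)) (hbarrier q)

end NormalizedSurface

/-! ### Third order at the diagonal -/

namespace MinimalSurface

variable {F N : ℝ × ℝ → E4} {E Φ : ℝ × ℝ → ℝ} {v x : ℝ × ℝ} {c : ℝ}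

lemma inner_self_dirDeriv_third (S : MinimalSurface F N E) (p v : ℝ × ℝ) :
    ⟪F p, dirDeriv v (dirDeriv v (dirDeriv v F)) p⟫
      = -(3 / 2 * dirDeriv v E p * (v.1 * v.1 + v.2 * v.2)) := by
  have h := dirDeriv_inner (p := p) ((S.smooth.dirDeriv v).dirDeriv v).differentiableAt
    S.smooth.differentiableAt v
  have hmetric := S.inner_dirDeriv_dirDeriv_dirDeriv p v v v
  rw [funext (S.inner_dirDeriv_dirDeriv_self · v v), dirDeriv_neg,
    dirDeriv_mul S.smooth_factor.differentiableAt (differentiableAt_const _),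
    dirDeriv_eq_zero_of_forall_eq fun _ => rfl] at h
  rw [real_inner_comm]
  linarith

lemma inner_normal_dirDeriv_third (S : MinimalSurface F N E)
    (hprincipal : dirDeriv v N x = c • dirDeriv v F x) :
    ⟪N x, dirDeriv v (dirDeriv v (dirDeriv v F)) x⟫ = dirDeriv v (secondForm F N v v) x
      - c * (dirDeriv v E x * (v.1 * v.1 + v.2 * v.2) / 2) := by
  have h : dirDeriv v (secondForm F N v v) x = _ :=
    dirDeriv_inner ((S.smooth.dirDeriv v).dirDeriv v).differentiableAt
      S.smooth_normal.differentiableAt v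
  have hmetric := S.inner_dirDeriv_dirDeriv_dirDeriv x v v v
  rw [hprincipal, real_inner_smul_right] at h
  rw [real_inner_comm, h]
  linear_combination -c / 2 * hmetric

lemma inner_tiltedNormal_dirDeriv_third (S : MinimalSurface F N E)
    (hnonneg : ∀ y, 0 ≤ twoPoint F N Φ x y)
    (hv : secondForm F N v v x + Φ x * E x * (v.1 * v.1 + v.2 * v.2) = 0) :
    ⟪tiltedNormal F N Φ x, dirDeriv v (dirDeriv v (dirDeriv v F)) x⟫ = 0 := by
  have hline {G : ℝ × ℝ → E4} (hG : IsSmooth G) := hasDerivAt_inner_comp_line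
    (fun _ => hG.differentiableAt) (tiltedNormal F N Φ x) x v
  have hthird := third_deriv_eq_zero_of_nonneg
    (fun τ => (hline S.smooth τ).const_add (Φ x)) (hline (S.smooth.dirDeriv v))
    (hline ((S.smooth.dirDeriv v).dirDeriv v) 0) (by simp [S.inner_tiltedNormal_self])
    (by simp [S.inner_tiltedNormal_dirDeriv])
    (by simpa [S.inner_tiltedNormal_dirDeriv_dirDeriv] using hv) fun τ => hnonneg _
  simpa using hthird

lemma dirDeriv_factor_eq_zero_of_twoPoint_nonneg (S : MinimalSurface F N E)
    (hnonneg : ∀ y, 0 ≤ twoPoint F N (fun p => 1 / E p) x y) (hv : v.1 * v.1 + v.2 * v.2 = 1)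
    (hsecond : ∀ p, secondForm F N v v p = -1)
    (hprincipal : dirDeriv v N x = (1 / E x) • dirDeriv v F x) : dirDeriv v E x = 0 := by
  have hE := (S.factor_pos x).ne'
  have h := S.inner_tiltedNormal_dirDeriv_third hnonneg (by rw [hsecond, hv]; field_simp; simp)
  rw [tiltedNormal, inner_sub_left, real_inner_smul_left, S.inner_self_dirDeriv_third,
    S.inner_normal_dirDeriv_third hprincipal, hv, dirDeriv_eq_zero_of_forall_eq hsecond] at h
  field_simp at h
  linarith

lemma factor_sq_eq_of_gradient_eq_zero (S : MinimalSurface F N E)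
    (hgrad : ∀ p, ∂₁ E p = 0 ∧ ∂₂ E p = 0) (p : ℝ × ℝ) :
    E p ^ 2 = secondForm F N (1, 0) (1, 0) p ^ 2 + secondForm F N (1, 0) (0, 1) p ^ 2 := by
  have hE := (S.factor_pos p).ne'
  have h := S.laplacian_log_factor p
  rw [dirDeriv_eq_zero_of_forall_eq (c := 0) fun q => by rw [S.dirDeriv_log_factor, (hgrad q).1,
      mul_zero], dirDeriv_eq_zero_of_forall_eq (c := 0) fun q => by
      rw [S.dirDeriv_log_factor, (hgrad q).2, mul_zero]] at h
  field_simp at h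
  linarith

end MinimalSurface

namespace NormalizedSurface

variable {F N : ℝ × ℝ → E4} {E : ℝ × ℝ → ℝ}

theorem gradient_factor_eq_zero (S : NormalizedSurface F N E 1) (hF : IsEmbeddedTorus F N)
    (p : ℝ × ℝ) : ∂₁ E p = 0 ∧ ∂₂ E p = 0 := by
  rcases S.gradient_factor_eq_zero_or_twoPoint_nonneg hF with hgrad | hnonneg
  · exact hgrad p
  rcases S.neg.gradient_factor_eq_zero_or_twoPoint_nonneg hF.neg with hgrad | hnonneg'
  · exact hgrad p
  constructor
  · exact S.neg.dirDeriv_factor_eq_zero_of_twoPoint_nonneg (hnonneg' p) (by simp)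
      (by simp [S.neg.secondForm_eq]) (by rw [S.neg.dirDeriv_normal_left, neg_div, neg_neg])
  · exact S.dirDeriv_factor_eq_zero_of_twoPoint_nonneg (hnonneg p) (by simp)
      (by simp [S.secondForm_eq]) (S.dirDeriv_normal_right p)

theorem factor_eq_one (S : NormalizedSurface F N E 1) (hF : IsEmbeddedTorus F N) (p : ℝ × ℝ) :
    E p = 1 := by
  have h := S.factor_sq_eq_of_gradient_eq_zero (S.gradient_factor_eq_zero hF) p
  rw [S.secondForm_sq_add_sq] at h
  exact (pow_eq_one_iff_of_nonneg (S.factor_pos p).le two_ne_zero).1 h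

end NormalizedSurface

/-! ### The Clifford torus -/

section HarmonicOscillator

variable {P V : Type*} [NormedAddCommGroup P] [NormedSpace ℝ P]
  [NormedAddCommGroup V] [NormedSpace ℝ V]

lemma hasDerivAt_cos_mul (ν τ : ℝ) :
    HasDerivAt (fun τ => cos (ν * τ)) (-(ν * sin (ν * τ))) τ := by
  simpa [mul_comm] using ((hasDerivAt_id τ).const_mul ν).cos

lemma hasDerivAt_sin_mul (ν τ : ℝ) : HasDerivAt (fun τ => sin (ν * τ)) (ν * cos (ν * τ)) τ := by
  simpa [mul_comm] using ((hasDerivAt_id τ).const_mul ν).sin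

-- Rotating the phase vector `(ν f, df/dτ)` back by the angle `ν τ` freezes it.
lemma eq_cos_smul_add_sin_smul_of_hasDerivAt {f f' : ℝ → V} {ν : ℝ} (hν : ν ≠ 0)
    (h₁ : ∀ τ, HasDerivAt f (f' τ) τ) (h₂ : ∀ τ, HasDerivAt f' (-(ν ^ 2) • f τ) τ) (τ : ℝ) :
    f τ = cos (ν * τ) • f 0 + (sin (ν * τ) / ν) • f' 0 := by
  have hfst (τ : ℝ) : HasDerivAt (fun τ => (ν * cos (ν * τ)) • f τ - sin (ν * τ) • f' τ) 0 τ := by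
    refine ((((hasDerivAt_cos_mul ν τ).const_mul ν).smul (h₁ τ)).sub
      ((hasDerivAt_sin_mul ν τ).smul (h₂ τ))).congr_deriv ?_
    module
  have hsnd (τ : ℝ) : HasDerivAt (fun τ => (ν * sin (ν * τ)) • f τ + cos (ν * τ) • f' τ) 0 τ := by
    refine ((((hasDerivAt_sin_mul ν τ).const_mul ν).smul (h₁ τ)).add
      ((hasDerivAt_cos_mul ν τ).smul (h₂ τ))).congr_deriv ?_
    module
  have hfst₀ := is_const_of_deriv_eq_zero (fun τ => (hfst τ).differentiableAt)
    (fun τ => (hfst τ).deriv) τ 0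
  have hsnd₀ := is_const_of_deriv_eq_zero (fun τ => (hsnd τ).differentiableAt)
    (fun τ => (hsnd τ).deriv) τ 0
  simp only [mul_zero, cos_zero, sin_zero, zero_smul, one_smul, sub_zero, zero_add, mul_one]
    at hfst₀ hsnd₀
  have hrotate : ν • f τ = cos (ν * τ) • ν • f 0 + sin (ν * τ) • f' 0 := by
    rw [← hfst₀, ← hsnd₀]
    match_scalars
    · linear_combination -ν * sin_sq_add_cos_sq (ν * τ)
    · ring
  rw [← inv_smul_smul₀ hν (f τ), hrotate, smul_add, smul_comm, inv_smul_smul₀ hν, smul_smul,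
    inv_mul_eq_div]

lemma eq_of_forall_dirDeriv_eq_zero {f : P → V} (hf : Differentiable ℝ f) {v : P}
    (h : ∀ p, dirDeriv v f p = 0) (p : P) (τ : ℝ) : f (p + τ • v) = f p := by
  have hline := hasDerivAt_comp_line hf p v
  simpa using is_const_of_deriv_eq_zero (fun τ => (hline τ).differentiableAt)
    (fun τ => (hline τ).deriv.trans (h _)) τ 0

lemma eq_cos_smul_add_sin_smul_of_dirDeriv {f : P → V} (hf : IsSmooth f) {v w : P} {ν : ℝ}
    (hν : ν ≠ 0) (hw : ∀ p, dirDeriv w f p = 0)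
    (hv : ∀ p, dirDeriv v (dirDeriv v f) p = -(ν ^ 2) • f p) (s t : ℝ) :
    f (s • v + t • w) = cos (ν * s) • f 0 + (sin (ν * s) / ν) • dirDeriv v f 0 := by
  rw [eq_of_forall_dirDeriv_eq_zero (fun _ => hf.differentiableAt) hw]
  simpa using eq_cos_smul_add_sin_smul_of_hasDerivAt hν
    (hasDerivAt_comp_line (fun _ => hf.differentiableAt) 0 v) (fun τ => by
      simpa only [hv] using
        hasDerivAt_comp_line (fun _ => (hf.dirDeriv v).differentiableAt) 0 v τ) s

end HarmonicOscillator

lemma exists_eq_mul_cos_and_eq_mul_sin {a b r : ℝ} (hr : 0 ≤ r) (h : a ^ 2 + b ^ 2 = r ^ 2) :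
    ∃ θ, a = r * cos θ ∧ b = r * sin θ := by
  have hnorm : ‖(⟨a, b⟩ : ℂ)‖ = r := by
    rw [Complex.norm_def, Complex.normSq_mk, ← sq, ← sq, h, sqrt_sq hr]
  exact ⟨Complex.arg ⟨a, b⟩, by rw [← hnorm, Complex.norm_mul_cos_arg],
    by rw [← hnorm, Complex.norm_mul_sin_arg]⟩

lemma inv_sqrt_two_mul_self : (√2)⁻¹ * (√2)⁻¹ = (1 / 2 : ℝ) := by
  rw [← mul_inv, mul_self_sqrt zero_le_two, one_div]

/-- The conformal parametrization of the Clifford torus by the plane with conformal factor `1`. -/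
def cliffordParam (p : ℝ × ℝ) : E4 :=
  (√2)⁻¹ • !₂[cos (√2 * p.1), sin (√2 * p.1), cos (√2 * p.2), sin (√2 * p.2)]

lemma range_cliffordParam : range cliffordParam = cliffordTorus := by
  apply Subset.antisymm
  · rintro _ ⟨p, rfl⟩
    constructor <;> simp [cliffordParam, mul_pow, ← mul_add]
  · rintro x ⟨h₀₁, h₂₃⟩
    rw [← inv_sqrt_two_mul_self, ← sq] at h₀₁ h₂₃
    obtain ⟨s, h₀, h₁⟩ := exists_eq_mul_cos_and_eq_mul_sin (by positivity) h₀₁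
    obtain ⟨t, h₂, h₃⟩ := exists_eq_mul_cos_and_eq_mul_sin (by positivity) h₂₃
    refine ⟨(s / √2, t / √2), ?_⟩
    ext i
    fin_cases i <;> simp [cliffordParam, mul_div_cancel₀, h₀, h₁, h₂, h₃]

namespace NormalizedSurface

variable {F N : ℝ × ℝ → E4}

lemma dirDeriv_dirDeriv_of_factor_one (S : NormalizedSurface F N 1 1) (v w p : ℝ × ℝ) :
    dirDeriv v (dirDeriv w F) p
      = (v.1 * w.1 - v.2 * w.2) • N p - (v.1 * w.1 + v.2 * w.2) • F p := by
  have hE (u : ℝ × ℝ) : dirDeriv u (1 : ℝ × ℝ → ℝ) p = 0 :=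
    dirDeriv_eq_zero_of_forall_eq (c := 1) (fun _ => rfl) u p
  have htangent (u : ℝ × ℝ) : ⟪dirDeriv v (dirDeriv w F) p, dirDeriv u F p⟫ = 0 := by
    simpa [hE] using S.inner_dirDeriv_dirDeriv_dirDeriv p v w u
  have hnormal := S.secondForm_eq v w p
  rw [secondForm] at hnormal
  apply S.ext_frame (p := p) <;>
    simp [inner_sub_left, real_inner_smul_left, S.inner_dirDeriv_dirDeriv_self, hnormal, htangent,
      S.inner_self_dirDeriv, S.inner_normal_dirDeriv, S.inner_normal_self, S.inner_self_normal,
      -inner_self_eq_norm_sq_to_K, S.inner_self, S.inner_normal_normal]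

lemma sub_normal_eq (S : NormalizedSurface F N 1 1) (s t : ℝ) :
    F (s, t) - N (s, t) = cos (√2 * s) • (F 0 - N 0) + (√2 * sin (√2 * s)) • ∂₁ F 0 := by
  have h₁ : ∂₁ (fun q => F q - N q) = fun q => (2 : ℝ) • ∂₁ F q := funext fun q => by
    rw [dirDeriv_sub S.smooth.differentiableAt S.smooth_normal.differentiableAt,
      S.dirDeriv_normal_left, Pi.one_apply]
    module
  have h₂ (q : ℝ × ℝ) : ∂₂ (fun q => F q - N q) q = 0 := by
    rw [dirDeriv_sub S.smooth.differentiableAt S.smooth_normal.differentiableAt,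
      S.dirDeriv_normal_right, Pi.one_apply]
    module
  have h₁₁ (q : ℝ × ℝ) : ∂₁ (∂₁ fun q => F q - N q) q = -(√2 ^ 2) • (F q - N q) := by
    rw [h₁, dirDeriv_const_smul _ (S.smooth.dirDeriv _).differentiableAt,
      S.dirDeriv_dirDeriv_of_factor_one, sq_sqrt zero_le_two]
    module
  have h := eq_cos_smul_add_sin_smul_of_dirDeriv (S.smooth.sub S.smooth_normal)
    (sqrt_ne_zero'.2 two_pos) h₂ h₁₁ s t
  have hcoef : sin (√2 * s) / √2 * 2 = √2 * sin (√2 * s) := by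
    rw [div_mul_eq_mul_div, mul_div_assoc, div_sqrt, mul_comm]
  simpa [h₁, smul_smul, hcoef] using h

lemma add_normal_eq (S : NormalizedSurface F N 1 1) (s t : ℝ) :
    F (s, t) + N (s, t) = cos (√2 * t) • (F 0 + N 0) + (√2 * sin (√2 * t)) • ∂₂ F 0 := by
  have h₂ : ∂₂ (fun q => F q + N q) = fun q => (2 : ℝ) • ∂₂ F q := funext fun q => by
    rw [dirDeriv_add S.smooth.differentiableAt S.smooth_normal.differentiableAt,
      S.dirDeriv_normal_right, Pi.one_apply]
    module
  have h₁ (q : ℝ × ℝ) : ∂₁ (fun q => F q + N q) q = 0 := by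
    rw [dirDeriv_add S.smooth.differentiableAt S.smooth_normal.differentiableAt,
      S.dirDeriv_normal_left, Pi.one_apply]
    module
  have h₂₂ (q : ℝ × ℝ) : ∂₂ (∂₂ fun q => F q + N q) q = -(√2 ^ 2) • (F q + N q) := by
    rw [h₂, dirDeriv_const_smul _ (S.smooth.dirDeriv _).differentiableAt,
      S.dirDeriv_dirDeriv_of_factor_one, sq_sqrt zero_le_two]
    module
  have h := eq_cos_smul_add_sin_smul_of_dirDeriv (S.smooth.add S.smooth_normal)
    (sqrt_ne_zero'.2 two_pos) h₁ h₂₂ t s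
  have hcoef : sin (√2 * t) / √2 * 2 = √2 * sin (√2 * t) := by
    rw [div_mul_eq_mul_div, mul_div_assoc, div_sqrt, mul_comm]
  simpa [h₂, smul_smul, hcoef] using h

lemma orthonormal_frame (S : NormalizedSurface F N 1 1) (p : ℝ × ℝ) :
    Orthonormal ℝ ![(√2)⁻¹ • (F p - N p), ∂₁ F p, (√2)⁻¹ • (F p + N p), ∂₂ F p] := by
  have hhalf := inv_sqrt_two_mul_self
  rw [orthonormal_iff_ite]
  intro i j
  fin_cases i <;> fin_cases j <;>
    simp [inner_smul_left, inner_smul_right, inner_sub_left, inner_sub_right, inner_add_left,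
      inner_add_right, S.inner_self, S.inner_normal_normal, S.inner_self_normal,
      S.inner_normal_self, S.inner_self_dirDeriv, S.inner_dirDeriv_self, S.inner_normal_dirDeriv,
      S.inner_dirDeriv_normal, S.conformal, -inner_self_eq_norm_sq_to_K] <;>
    linarith

lemma eq_frame_combination (S : NormalizedSurface F N 1 1) (s t : ℝ) :
    F (s, t) = ((√2)⁻¹ * cos (√2 * s)) • (√2)⁻¹ • (F 0 - N 0) + ((√2)⁻¹ * sin (√2 * s)) • ∂₁ F 0
      + ((√2)⁻¹ * cos (√2 * t)) • (√2)⁻¹ • (F 0 + N 0) + ((√2)⁻¹ * sin (√2 * t)) • ∂₂ F 0 := by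
  have hcos (c : ℝ) : (√2)⁻¹ * c * (√2)⁻¹ = 1 / 2 * c := by
    rw [mul_right_comm, inv_sqrt_two_mul_self]
  have hinv : 1 / 2 * √2 = (√2)⁻¹ := by
    rw [← inv_sqrt_two_mul_self, mul_assoc, inv_mul_cancel₀ (by simp), mul_one]
  calc F (s, t) = (1 / 2 : ℝ) • ((F (s, t) - N (s, t)) + (F (s, t) + N (s, t))) := by module
    _ = _ := by
      rw [S.sub_normal_eq, S.add_normal_eq, smul_smul, smul_smul, hcos, hcos, ← hinv]
      module

theorem exists_cliffordTorus_of_factor_one (S : NormalizedSurface F N 1 1) :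
    ∃ Q : E4 ≃ₗᵢ[ℝ] E4, range F = Q '' cliffordTorus := by
  have horth := S.orthonormal_frame 0
  let b := OrthonormalBasis.mk horth
    (horth.linearIndependent.span_eq_top_of_card_eq_finrank (by simp)).ge
  refine ⟨b.repr.symm, ?_⟩
  rw [← range_cliffordParam, ← range_comp]
  congr 1
  funext ⟨s, t⟩
  rw [S.eq_frame_combination, Function.comp_apply, ← b.sum_repr_symm]
  simp [b, Fin.sum_univ_four, cliffordParam]

end NormalizedSurface

/-! ### The Hopf differential -/

lemma differentiable_complex_of_cauchyRiemann {u w : ℝ × ℝ → ℝ} (hu : Differentiable ℝ u)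
    (hw : Differentiable ℝ w) (hleft : ∀ p, ∂₂ u p = ∂₁ w p) (hright : ∀ p, ∂₂ w p = -∂₁ u p) :
    Differentiable ℂ fun z : ℂ => (u (z.re, z.im) : ℂ) - Complex.I * w (z.re, z.im) := by
  let A : ℂ →L[ℝ] ℝ × ℝ := Complex.equivRealProdCLM.toContinuousLinearMap
  intro z
  have hcomp {g : ℝ × ℝ → ℝ} (hg : Differentiable ℝ g) : HasFDerivAt (fun z => (g (A z) : ℂ))
      (Complex.ofRealCLM.comp ((fderiv ℝ g (A z)).comp A)) z :=
    Complex.ofRealCLM.hasFDerivAt.comp z ((hg (A z)).hasFDerivAt.comp z A.hasFDerivAt)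
  have hderiv : HasFDerivAt (fun z => (u (A z) : ℂ) - Complex.I * w (A z)) _ z :=
    (hcomp hu).sub ((hcomp hw).const_mul Complex.I)
  refine differentiableAt_complex_iff_differentiableAt_real.2 ⟨hderiv.differentiableAt, ?_⟩
  have hleft' : fderiv ℝ u (A z) (A Complex.I) = fderiv ℝ w (A z) (A 1) := hleft (A z)
  have hright' : fderiv ℝ w (A z) (A Complex.I) = -fderiv ℝ u (A z) (A 1) := hright (A z)
  refine Eq.trans (congrArg (fun D : ℂ →L[ℝ] ℂ => D Complex.I) hderiv.fderiv) ?_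
  refine Eq.trans ?_ (congrArg (fun D : ℂ →L[ℝ] ℂ => Complex.I • D 1) hderiv.fderiv).symm
  simp only [sub_apply, ContinuousLinearMap.comp_apply, smul_apply, hleft', hright',
    Complex.ofRealCLM_apply, smul_eq_mul, Complex.ofReal_neg]
  linear_combination (fderiv ℝ w (A z) (A 1) : ℂ) * Complex.I_mul_I

lemma eq_of_cauchyRiemann_of_bounded {u w : ℝ × ℝ → ℝ} (hu : Differentiable ℝ u)
    (hw : Differentiable ℝ w) (hleft : ∀ p, ∂₂ u p = ∂₁ w p) (hright : ∀ p, ∂₂ w p = -∂₁ u p)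
    (hbu : Bornology.IsBounded (range u)) (hbw : Bornology.IsBounded (range w)) (p q : ℝ × ℝ) :
    u p = u q ∧ w p = w q := by
  have hbounded : Bornology.IsBounded
      (range fun z : ℂ => (u (z.re, z.im) : ℂ) - Complex.I * w (z.re, z.im)) := by
    obtain ⟨a, ha⟩ := isBounded_iff_forall_norm_le.1 hbu
    obtain ⟨b, hb⟩ := isBounded_iff_forall_norm_le.1 hbw
    refine isBounded_iff_forall_norm_le.2 ⟨a + b, ?_⟩
    rintro _ ⟨z, rfl⟩
    refine (norm_sub_le _ _).trans (add_le_add ?_ ?_)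
    · simpa using ha _ (mem_range_self (z.re, z.im))
    · simpa using hb _ (mem_range_self (z.re, z.im))
  have hliouville := (differentiable_complex_of_cauchyRiemann hu hw hleft hright
    ).apply_eq_apply_of_bounded hbounded ⟨p.1, p.2⟩ ⟨q.1, q.2⟩
  constructor
  · simpa using congrArg Complex.re hliouville
  · simpa using congrArg Complex.im hliouville

lemma periodic_secondForm {F N : ℝ × ℝ → E4} {l : ℝ × ℝ} (hF : Function.Periodic F l)
    (hN : Function.Periodic N l) (v w : ℝ × ℝ) : Function.Periodic (secondForm F N v w) l :=
  fun p => by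
    simp only [secondForm, periodic_dirDeriv (periodic_dirDeriv hF w) v p, hN p]

namespace IsEmbeddedTorus

variable {F N : ℝ × ℝ → E4}

lemma isCompact_range {X : Type*} [TopologicalSpace X] {f : ℝ × ℝ → X} (hF : IsEmbeddedTorus F N)
    (hf : Continuous f) (hper : ∀ l, Function.Periodic F l → Function.Periodic f l) :
    IsCompact (range f) := by
  obtain ⟨K, hK, hcover⟩ := hF.cocompact
  suffices range f = f '' K from this ▸ hK.image hf
  refine (range_subset_iff.2 fun x => ?_).antisymm (image_subset_range f K)
  obtain ⟨l, hl, hlK⟩ := hcover x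
  exact ⟨x + l, hlK, hper l hl x⟩

lemma exists_forall_le {f : ℝ × ℝ → ℝ} (hF : IsEmbeddedTorus F N) (hf : Continuous f)
    (hper : ∀ l, Function.Periodic F l → Function.Periodic f l) : ∃ p, ∀ q, f p ≤ f q := by
  obtain ⟨_, ⟨p, rfl⟩, hp⟩ := (hF.isCompact_range hf hper).exists_isLeast (range_nonempty f)
  exact ⟨p, fun q => hp (mem_range_self q)⟩

end IsEmbeddedTorus

namespace MinimalSurface

variable {F N : ℝ × ℝ → E4} {E : ℝ × ℝ → ℝ}

lemma hopf_const (S : MinimalSurface F N E) (hF : IsEmbeddedTorus F N) (p q : ℝ × ℝ) :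
    secondForm F N (1, 0) (1, 0) p = secondForm F N (1, 0) (1, 0) q ∧
      secondForm F N (1, 0) (0, 1) p = secondForm F N (1, 0) (0, 1) q := by
  have hsmooth := smooth_secondForm S.smooth S.smooth_normal
  have hbounded v w : Bornology.IsBounded (range (secondForm F N v w)) :=
    (hF.isCompact_range (hsmooth v w).continuous fun l hl =>
      periodic_secondForm hl (hF.periodic_normal l hl) v w).isBounded
  exact eq_of_cauchyRiemann_of_bounded (fun _ => (hsmooth _ _).differentiableAt)
    (fun _ => (hsmooth _ _).differentiableAt) S.hopf_cauchyRiemann_left S.hopf_cauchyRiemann_right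
    (hbounded _ _) (hbounded _ _) p q

lemma exists_hopf_ne_zero (S : MinimalSurface F N E) (hF : IsEmbeddedTorus F N) :
    ∃ p, secondForm F N (1, 0) (1, 0) p ^ 2 + secondForm F N (1, 0) (0, 1) p ^ 2 ≠ 0 := by
  obtain ⟨p, hp⟩ := hF.exists_forall_le S.smooth_log_factor.continuous
    fun l hl x => by rw [S.periodic_factor hl]
  have hsecond v : 0 ≤ dirDeriv v (dirDeriv v fun q => log (E q)) p := by
    have hline := hasDerivAt_comp_line
      (fun _ => (S.smooth_log_factor.dirDeriv v).differentiableAt) p v 0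
    rw [zero_smul, add_zero] at hline
    exact second_deriv_nonneg_of_forall_le
      (hasDerivAt_comp_line (fun _ => S.smooth_log_factor.differentiableAt) p v)
      hline fun τ => by simpa using hp (p + τ • v)
  refine ⟨p, fun hzero => ?_⟩
  have hlaplacian := S.laplacian_log_factor p
  rw [hzero, mul_zero, zero_div] at hlaplacian
  linarith [hsecond (1, 0), hsecond (0, 1), S.factor_pos p]

end MinimalSurface

/-! ### Complex-linear changes of coordinates -/

/-- Multiplication by the nonzero complex number `c`, as a linear automorphism of the plane
`ℝ × ℝ` identified with `ℂ` through `(s, t) ↦ s + i t`. -/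
def complexScaling (c : ℂˣ) : (ℝ × ℝ) ≃L[ℝ] ℝ × ℝ :=
  (Complex.equivRealProdCLM.symm.trans (ContinuousLinearEquiv.smulLeft c)).trans
    Complex.equivRealProdCLM

lemma complexScaling_apply (c : ℂˣ) (p : ℝ × ℝ) : complexScaling c p
    = ((c : ℂ).re * p.1 - (c : ℂ).im * p.2, (c : ℂ).re * p.2 + (c : ℂ).im * p.1) := by
  simp [complexScaling, Units.smul_def, Complex.equivRealProdCLM_apply]

lemma secondForm_comp_clm {F : ℝ × ℝ → E4} (hF : IsSmooth F) (N : ℝ × ℝ → E4)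
    (L : ℝ × ℝ →L[ℝ] ℝ × ℝ) (v w p : ℝ × ℝ) :
    secondForm (fun q => F (L q)) (fun q => N (L q)) v w p = secondForm F N (L v) (L w) (L p) := by
  rw [secondForm, dirDeriv_comp_clm L fun _ => hF.differentiableAt,
    dirDeriv_comp_clm L fun _ => (hF.dirDeriv _).differentiableAt, secondForm]

lemma IsEmbeddedTorus.comp_clm {F N : ℝ × ℝ → E4} (hF : IsEmbeddedTorus F N)
    (L : (ℝ × ℝ) ≃L[ℝ] ℝ × ℝ) :
    IsEmbeddedTorus (fun p => F (L p)) (fun p => N (L p)) where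
  periodic_of_eq p q h r := by
    simpa only [map_add, map_sub] using hF.periodic_of_eq _ _ h (L r)
  periodic_normal l hl r := by
    have hperiod : Function.Periodic F (L l) := fun q => by
      simpa using hl (L.symm q)
    simpa only [map_add] using hF.periodic_normal (L l) hperiod (L r)
  cocompact := by
    obtain ⟨K, hK, hcover⟩ := hF.cocompact
    refine ⟨L.symm '' K, hK.image L.symm.continuous, fun x => ?_⟩
    obtain ⟨l, hl, hlK⟩ := hcover (L x)
    exact ⟨L.symm l, fun r => by simpa using hl (L r), L x + l, hlK, by simp⟩

namespace MinimalSurface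

variable {F N : ℝ × ℝ → E4} {E : ℝ × ℝ → ℝ}

lemma comp_complexScaling (S : MinimalSurface F N E) (c : ℂˣ) :
    MinimalSurface (fun p => F (complexScaling c p)) (fun p => N (complexScaling c p))
      (fun p => Complex.normSq c * E (complexScaling c p)) := by
  have hderiv v : dirDeriv v (fun q => F (complexScaling c q))
      = fun q => dirDeriv (complexScaling c v) F (complexScaling c q) :=
    dirDeriv_comp_clm (complexScaling c : ℝ × ℝ →L[ℝ] ℝ × ℝ) (fun _ => S.smooth.differentiableAt) v
  have hderiv₂ v w : dirDeriv v (fun q => dirDeriv w F (complexScaling c q))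
      = fun q => dirDeriv (complexScaling c v) (dirDeriv w F) (complexScaling c q) :=
    dirDeriv_comp_clm (complexScaling c : ℝ × ℝ →L[ℝ] ℝ × ℝ)
      (fun _ => (S.smooth.dirDeriv w).differentiableAt) v
  refine ⟨S.smooth.comp (complexScaling c).contDiff, S.smooth_normal.comp
    (complexScaling c).contDiff, fun p => mul_pos (Complex.normSq_pos.2 c.ne_zero) (S.factor_pos _),
    fun p => S.inner_self _, fun p => S.inner_normal_normal _, fun p => S.inner_self_normal _,
    fun p v => ?_, fun p v w => ?_, fun p => ?_⟩
  · rw [hderiv, S.inner_normal_dirDeriv]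
  · simp only [hderiv, S.conformal, complexScaling_apply c v, complexScaling_apply c w,
      Complex.normSq_apply]
    ring
  · simp only [hderiv, hderiv₂]
    rw [dirDeriv_dirDeriv_eq_coordinates S.smooth (complexScaling c (1, 0)),
      dirDeriv_dirDeriv_eq_coordinates S.smooth (complexScaling c (0, 1)),
      complexScaling_apply c (1, 0), complexScaling_apply c (0, 1)]
    rw [Complex.normSq_apply]
    linear_combination (norm := module) ((c : ℂ).re * (c : ℂ).re + (c : ℂ).im * (c : ℂ).im) •
      S.laplacian (complexScaling c p)

theorem exists_normalizedSurface (S : MinimalSurface F N E) (hF : IsEmbeddedTorus F N) :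
    ∃ c : ℂˣ, NormalizedSurface (fun p => F (complexScaling c p))
      (fun p => N (complexScaling c p)) (fun p => Complex.normSq c * E (complexScaling c p)) 1 := by
  obtain ⟨p₀, hp₀⟩ := S.exists_hopf_ne_zero hF
  set h := secondForm F N (1, 0) (1, 0) p₀ with hh
  set k := secondForm F N (1, 0) (0, 1) p₀ with hk
  let z : ℂ := ⟨h, -k⟩
  have hz : z ≠ 0 := fun hz => hp₀ (by
    simpa [z, Complex.normSq_apply, ← sq] using congrArg Complex.normSq hz)
  -- The Hopf differential `z dζ²` becomes `dζ²` in the coordinate `ζ / c` with `c² z = 1`.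
  obtain ⟨c, hc⟩ := IsAlgClosed.exists_pow_nat_eq z⁻¹ (n := 2) two_pos
  have hcz : c * c * z = 1 := by rw [← sq, hc, inv_mul_cancel₀ hz]
  have hc₀ : c ≠ 0 := fun h => by simp [h] at hcz
  refine ⟨Units.mk0 c hc₀, S.comp_complexScaling _, one_pow 2, fun v w p => ?_⟩
  obtain ⟨hconst, kconst⟩ := S.hopf_const hF (complexScaling (Units.mk0 c hc₀) p) p₀
  have hre := congrArg Complex.re hcz
  have him := congrArg Complex.im hcz
  simp only [Complex.mul_re, Complex.mul_im, Complex.one_re, Complex.one_im, z] at hre him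
  refine (secondForm_comp_clm S.smooth N (complexScaling (Units.mk0 c hc₀) :
    ℝ × ℝ →L[ℝ] ℝ × ℝ) v w p).trans ?_
  rw [secondForm_eq_coordinates S.smooth, S.secondForm_trace]
  simp only [ContinuousLinearEquiv.coe_coe, hconst, kconst, ← hh, ← hk,
    complexScaling_apply _ v, complexScaling_apply _ w, Units.val_mk0]
  linear_combination (v.1 * w.1 - v.2 * w.2) * hre - (v.1 * w.2 + v.2 * w.1) * him

theorem exists_cliffordTorus (S : MinimalSurface F N E) (hF : IsEmbeddedTorus F N) :
    ∃ Q : E4 ≃ₗᵢ[ℝ] E4, range F = Q '' cliffordTorus := by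
  obtain ⟨c, T⟩ := S.exists_normalizedSurface hF
  rw [funext (T.factor_eq_one (hF.comp_clm (complexScaling c)))] at T
  obtain ⟨Q, hQ⟩ := T.exists_cliffordTorus_of_factor_one
  exact ⟨Q, ((complexScaling c).surjective.range_comp F).symm.trans hQ⟩

end MinimalSurface

/-! ### The unit normal field -/

/-- The vector product of three vectors of `ℝ⁴`: the `i`-th coordinate is the `i`-th signed maximal
minor of the matrix with rows `a`, `b`, `c`. -/
def tripleCross (a b c : E4) : E4 :=
  let minor (i j k : Fin 4) := !![a i, a j, a k; b i, b j, b k; c i, c j, c k].det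
  !₂[minor 1 2 3, -minor 0 2 3, minor 0 1 3, -minor 0 1 2]

section TripleCross

variable (a b c : E4)

lemma inner_tripleCross (u : E4) :
    ⟪u, tripleCross a b c⟫ = (Matrix.of ![⇑u, ⇑a, ⇑b, ⇑c]).det := by
  simp [tripleCross, PiLp.inner_apply, Fin.sum_univ_succ, Matrix.det_succ_row_zero, Fin.succAbove]
  ring

lemma inner_tripleCross_left : ⟪a, tripleCross a b c⟫ = 0 := by
  rw [inner_tripleCross]
  exact Matrix.det_zero_of_row_eq (i := 0) (j := 1) (by decide) rfl

lemma inner_tripleCross_middle : ⟪b, tripleCross a b c⟫ = 0 := by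
  rw [inner_tripleCross]
  exact Matrix.det_zero_of_row_eq (i := 0) (j := 2) (by decide) rfl

lemma inner_tripleCross_right : ⟪c, tripleCross a b c⟫ = 0 := by
  rw [inner_tripleCross]
  exact Matrix.det_zero_of_row_eq (i := 0) (j := 3) (by decide) rfl

lemma inner_tripleCross_tripleCross : ⟪tripleCross a b c, tripleCross a b c⟫
    = !![⟪a, a⟫, ⟪a, b⟫, ⟪a, c⟫; ⟪b, a⟫, ⟪b, b⟫, ⟪b, c⟫; ⟪c, a⟫, ⟪c, b⟫, ⟪c, c⟫].det := by
  simp only [tripleCross, PiLp.inner_apply, RCLike.inner_apply, ringHom_apply, Fin.sum_univ_four,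
    Matrix.det_fin_three, Matrix.of_apply, Matrix.cons_val', Matrix.cons_val_zero,
    Matrix.cons_val_fin_one, Matrix.cons_val_one, Matrix.cons_val]
  ring

end TripleCross

lemma smooth_tripleCross {P : Type*} [NormedAddCommGroup P] [NormedSpace ℝ P] {f g h : P → E4}
    (hf : IsSmooth f) (hg : IsSmooth g) (hh : IsSmooth h) :
    IsSmooth fun p => tripleCross (f p) (g p) (h p) := by
  have hminor i j k : ContDiff ℝ ∞ fun p => !![f p i, f p j, f p k; g p i, g p j, g p k;
      h p i, h p j, h p k].det := by
    simp only [Matrix.det_fin_three, Matrix.of_apply, Matrix.cons_val', Matrix.cons_val_zero,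
      Matrix.cons_val_fin_one, Matrix.cons_val_one, Matrix.cons_val]
    fun_prop
  refine contDiff_euclidean.2 fun i => ?_
  fin_cases i
  exacts [hminor 1 2 3, (hminor 0 2 3).neg, hminor 0 1 3, (hminor 0 1 2).neg]

section UnitNormal

variable {F : ℝ × ℝ → E4} {E : ℝ × ℝ → ℝ}

/-- The unit normal field of the conformal immersion `F : ℝ² → S³` with conformal factor `E`. -/
def unitNormal (F : ℝ × ℝ → E4) (E : ℝ × ℝ → ℝ) (p : ℝ × ℝ) : E4 :=
  (E p)⁻¹ • tripleCross (F p) (∂₁ F p) (∂₂ F p)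

theorem minimalSurface_unitNormal (hF : IsSmooth F) (hE : ∀ p, 0 < E p)
    (hsphere : ∀ p, ⟪F p, F p⟫ = 1) (h₁₁ : ∀ p, ⟪∂₁ F p, ∂₁ F p⟫ = E p)
    (h₂₂ : ∀ p, ⟪∂₂ F p, ∂₂ F p⟫ = E p) (h₁₂ : ∀ p, ⟪∂₁ F p, ∂₂ F p⟫ = 0)
    (hlap : ∀ p, ∂₁ (∂₁ F) p + ∂₂ (∂₂ F) p = (-(2 * E p)) • F p) :
    MinimalSurface F (unitNormal F E) E where
  smooth := hF
  smooth_normal := by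
    have hE' : IsSmooth E := by
      rw [← funext h₁₁]
      exact (hF.dirDeriv _).inner ℝ (hF.dirDeriv _)
    exact ContDiff.smul (hE'.inv fun p => (hE p).ne')
      (smooth_tripleCross hF (hF.dirDeriv _) (hF.dirDeriv _))
  factor_pos := hE
  inner_self := hsphere
  inner_normal_normal p := by
    have htangent v : ⟪F p, dirDeriv v F p⟫ = 0 := by
      have hconst := dirDeriv_inner hF.differentiableAt hF.differentiableAt v (p := p)
      rw [dirDeriv_eq_zero_of_forall_eq hsphere, real_inner_comm] at hconst
      linarith
    rw [unitNormal, real_inner_smul_left, real_inner_smul_right, inner_tripleCross_tripleCross]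
    simp [-inner_self_eq_norm_sq_to_K, Matrix.det_fin_three, hsphere, h₁₁, h₂₂, h₁₂, htangent,
      (hE p).ne']
  inner_self_normal p := by
    rw [unitNormal, real_inner_smul_right, inner_tripleCross_left, mul_zero]
  inner_normal_dirDeriv p v := by
    rw [unitNormal, real_inner_smul_left, dirDeriv_eq_coordinates F v, inner_add_right,
      real_inner_smul_right, real_inner_smul_right, real_inner_comm, inner_tripleCross_middle,
      real_inner_comm, inner_tripleCross_right]
    ring
  conformal p v w := by
    have h₂₁ : ⟪∂₂ F p, ∂₁ F p⟫ = 0 := by rw [real_inner_comm, h₁₂]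
    simp only [dirDeriv_eq_coordinates F v, dirDeriv_eq_coordinates F w, inner_add_left,
      inner_add_right, real_inner_smul_left, real_inner_smul_right, h₁₁, h₂₂, h₁₂, h₂₁]
    ring
  laplacian := hlap

lemma periodic_unitNormal {l : ℝ × ℝ} (hF : Function.Periodic F l) (hE : Function.Periodic E l) :
    Function.Periodic (unitNormal F E) l := fun p => by
  simp only [unitNormal, hE p, hF p, periodic_dirDeriv hF _ p]

end UnitNormal

/-! ### Lattices and partial derivatives -/

lemma exists_compact_add_mem_span {ι V : Type*} [Finite ι] [NormedAddCommGroup V]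
    [NormedSpace ℝ V] (b : Module.Basis ι ℝ V) : ∃ K : Set V, IsCompact K ∧
      ∀ x, ∃ l ∈ Submodule.span ℤ (range b), x + l ∈ K := by
  have := Fintype.ofFinite ι
  have := b.finiteDimensional_of_finite
  have := FiniteDimensional.proper_real V
  refine ⟨closure (ZSpan.fundamentalDomain b),
    (ZSpan.fundamentalDomain_isBounded b).isCompact_closure, fun x => ⟨-(ZSpan.floor b x),
      neg_mem (ZSpan.floor b x).2, subset_closure ?_⟩⟩
  rw [← sub_eq_add_neg]
  exact ZSpan.fract_mem_fundamentalDomain b x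

lemma exists_compact_add_mem_lattice {v w : ℝ × ℝ} (h : LinearIndependent ℝ ![v, w]) :
    ∃ K : Set (ℝ × ℝ), IsCompact K ∧ ∀ x, ∃ m n : ℤ, x + (m • v + n • w) ∈ K := by
  let b := basisOfLinearIndependentOfCardEqFinrank h (by simp)
  obtain ⟨K, hK, hcover⟩ := exists_compact_add_mem_span b
  refine ⟨K, hK, fun x => ?_⟩
  obtain ⟨l, hl, hlK⟩ := hcover x
  rw [coe_basisOfLinearIndependentOfCardEqFinrank, Matrix.range_cons, Matrix.range_cons,
    Matrix.range_empty, union_empty, singleton_union, Submodule.mem_span_pair] at hl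
  obtain ⟨m, n, rfl⟩ := hl
  exact ⟨m, n, hlK⟩

lemma deriv_fst {V : Type*} [NormedAddCommGroup V] [NormedSpace ℝ V] {g : ℝ × ℝ → V}
    {s t : ℝ} (hg : DifferentiableAt ℝ g (s, t)) : deriv (fun u => g (u, t)) s = ∂₁ g (s, t) :=
  (hg.hasFDerivAt.comp_hasDerivAt s ((hasDerivAt_id s).prodMk (hasDerivAt_const s t))).deriv

lemma deriv_snd {V : Type*} [NormedAddCommGroup V] [NormedSpace ℝ V] {g : ℝ × ℝ → V}
    {s t : ℝ} (hg : DifferentiableAt ℝ g (s, t)) : deriv (fun u => g (s, u)) t = ∂₂ g (s, t) :=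
  (hg.hasFDerivAt.comp_hasDerivAt t ((hasDerivAt_const t s).prodMk (hasDerivAt_id t))).deriv

section PartialDerivatives

variable {F : ℝ → ℝ → E4}
lemma pds_eq_dirDeriv (hF : IsSmooth fun p : ℝ × ℝ => F p.1 p.2) (s t : ℝ) :
    pds F s t = ∂₁ (fun p : ℝ × ℝ => F p.1 p.2) (s, t) :=
  deriv_fst (g := fun p : ℝ × ℝ => F p.1 p.2) hF.differentiableAt

lemma pdt_eq_dirDeriv (hF : IsSmooth fun p : ℝ × ℝ => F p.1 p.2) (s t : ℝ) :
    pdt F s t = ∂₂ (fun p : ℝ × ℝ => F p.1 p.2) (s, t) :=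
  deriv_snd (g := fun p : ℝ × ℝ => F p.1 p.2) hF.differentiableAt

lemma lap_eq_dirDeriv (hF : IsSmooth fun p : ℝ × ℝ => F p.1 p.2) (s t : ℝ) :
    lap F s t = ∂₁ (∂₁ fun p : ℝ × ℝ => F p.1 p.2) (s, t)
      + ∂₂ (∂₂ fun p : ℝ × ℝ => F p.1 p.2) (s, t) := by
  simp only [lap, pds_eq_dirDeriv hF, pdt_eq_dirDeriv hF]
  rw [deriv_fst (hF.dirDeriv _).differentiableAt, deriv_snd (hF.dirDeriv _).differentiableAt]

end PartialDerivatives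

/-- **Lawson's conjecture (Brendle's theorem)**: let `Λ ⊂ ℝ²` be a lattice spanned by
two linearly independent vectors and let `F : ℝ² → S³ ⊂ ℝ⁴` be a smooth `Λ`-periodic
conformal immersion satisfying the minimal surface (harmonic map) equation
`ΔF + (|∂F/∂s|² + |∂F/∂t|²)F = 0`, and which is embedded, i.e. `F(p) = F(q)` implies
`p - q ∈ Λ`.  Then `F` is congruent to the Clifford torus: there is an orthogonal
transformation `Q ∈ O(4)` with `F(ℝ²) = Q ⬝ {x ∈ S³ : x₁² + x₂² = x₃² + x₄² = 1/2}`. -/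
theorem lawson_conjecture
    (v₁ v₂ : ℝ × ℝ) (hindep : LinearIndependent ℝ ![v₁, v₂])
    (Λ : Set (ℝ × ℝ)) (hΛ : Λ = {w : ℝ × ℝ | ∃ m n : ℤ, w = m • v₁ + n • v₂})
    (F : ℝ → ℝ → E4)
    (hsm : ContDiff ℝ (⊤ : ℕ∞) (fun p : ℝ × ℝ => F p.1 p.2))
    (hsphere : ∀ s t : ℝ, ‖F s t‖ = 1)
    (hper : ∀ s t : ℝ, ∀ w ∈ Λ, F (s + w.1) (t + w.2) = F s t)
    (hconf : ∀ s t : ℝ, ‖pds F s t‖ = ‖pdt F s t‖ ∧ 0 < ‖pds F s t‖ ∧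
      ⟪pds F s t, pdt F s t⟫ = 0)
    (hmin : ∀ s t : ℝ,
      lap F s t + (‖pds F s t‖ ^ 2 + ‖pdt F s t‖ ^ 2) • F s t = 0)
    (hemb : ∀ s t s' t' : ℝ, F s t = F s' t' → ((s', t') - (s, t) : ℝ × ℝ) ∈ Λ) :
    ∃ Q : E4 ≃ₗᵢ[ℝ] E4,
      range (fun p : ℝ × ℝ => F p.1 p.2) = Q '' cliffordTorus := by
  let f : ℝ × ℝ → E4 := fun p => F p.1 p.2
  let E : ℝ × ℝ → ℝ := fun p => ‖∂₁ f p‖ ^ 2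
  simp only [pds_eq_dirDeriv hsm, pdt_eq_dirDeriv hsm, lap_eq_dirDeriv hsm] at hconf hmin
  have hperiod : ∀ w ∈ Λ, Function.Periodic f w := fun w hw p => hper p.1 p.2 w hw
  have hsurface : MinimalSurface f (unitNormal f E) E :=
    minimalSurface_unitNormal hsm (fun p => pow_pos (hconf p.1 p.2).2.1 2)
      (fun p => by rw [real_inner_self_eq_norm_sq, hsphere, one_pow])
      (fun p => real_inner_self_eq_norm_sq _)
      (fun p => by rw [real_inner_self_eq_norm_sq, ← (hconf p.1 p.2).1])
      (fun p => (hconf p.1 p.2).2.2)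
      (fun p => by
        rw [eq_neg_of_add_eq_zero_left (hmin p.1 p.2), ← (hconf p.1 p.2).1, ← two_mul, neg_smul])
  have htorus : IsEmbeddedTorus f (unitNormal f E) := by
    refine ⟨fun p q h => hperiod _ (hemb _ _ _ _ h), fun l hl =>
      periodic_unitNormal hl (hsurface.periodic_factor hl), ?_⟩
    obtain ⟨K, hK, hcover⟩ := exists_compact_add_mem_lattice hindep
    refine ⟨K, hK, fun x => ?_⟩
    obtain ⟨m, n, hmem⟩ := hcover x
    exact ⟨m • v₁ + n • v₂, hperiod _ (hΛ ▸ ⟨m, n, rfl⟩), hmem⟩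
  exact hsurface.exists_cliffordTorus htorus
end
end
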